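/- Let P ⊂ ℝ^n be a smooth full-dimensional lattice polytope. Then the alternating sum over all nonempty faces F of P (including P itself) satisfies Σ_F (-1)^{n - dim F} (dim F + 1)! Vol(F) ≥ 0, where Vol(F) denotes the relative lattice volume of the face F. -/

import Mathlib

noncomputable section

open MeasureTheory Pointwise

/-- A point of `ℝ^n` is a lattice point if all its coordinates are integers. -/
def IsLatticePt {n : ℕ} (x : Fin n → ℝ) : Prop := ∀ i, ∃ z : ℤ, x i = (z : ℝ)

/-- A lattice polytope is the convex hull of a finite set of lattice points. -/
def IsLatticePolytope {n : ℕ} (P : Set (Fin n → ℝ)) : Prop :=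
  ∃ V : Finset (Fin n → ℝ), (∀ v ∈ V, IsLatticePt v) ∧
    P = convexHull ℝ (↑V : Set (Fin n → ℝ))

/-- A rational polytope is the convex hull of a finite set of rational points. -/
def IsRatPolytope {n : ℕ} (P : Set (Fin n → ℝ)) : Prop :=
  ∃ V : Finset (Fin n → ℝ), (∀ v ∈ V, ∀ i, ∃ q : ℚ, v i = (q : ℝ)) ∧
    P = convexHull ℝ (↑V : Set (Fin n → ℝ))

/-- The vertices `0, e_1, …, e_t` of the standard unimodular simplex `Δ_t ⊆ ℝ^t`. -/
def stdSimplexVert (t : ℕ) (k : Fin (t + 1)) : Fin t → ℝ :=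
  fun j => if (k : ℕ) = (j : ℕ) + 1 then 1 else 0

/-- The standard unimodular simplex `Δ_t = conv(0, e_1, …, e_t) ⊆ ℝ^t`. -/
def unimodSimplex (t : ℕ) : Set (Fin t → ℝ) := convexHull ℝ (Set.range (stdSimplexVert t))

/-- The interior of the dilate `s • P` contains a lattice point. -/
def HasInteriorLatticePt {n : ℕ} (P : Set (Fin n → ℝ)) (s : ℕ) : Prop :=
  ∃ x ∈ interior ((s : ℝ) • P), IsLatticePt x

/-- The codegree `cd(P)`: the least positive integer `t` such that the interior of `t • P`
contains a lattice point. -/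
def codeg {n : ℕ} (P : Set (Fin n → ℝ)) : ℕ :=
  sInf {t : ℕ | 0 < t ∧ HasInteriorLatticePt P t}

/-- Pairing of an integer vector with a real vector. -/
def iprod {n : ℕ} (a : Fin n → ℤ) (x : Fin n → ℝ) : ℝ := ∑ i, (a i : ℝ) * x i

/-- An integer vector is primitive if it is nonzero and its coordinates have no common
non-unit divisor. -/
def IsPrimitive {n : ℕ} (a : Fin n → ℤ) : Prop :=
  a ≠ 0 ∧ ∀ d : ℤ, (∀ i, d ∣ a i) → IsUnit d

/-- `(a, b)` is a facet inequality of `P ⊆ ℝ^n`: `a` is a primitive integer inner normal,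
`b = min_{x ∈ P} ⟨a, x⟩`, and the corresponding face has dimension `n - 1`. -/
def IsFacetIneq {n : ℕ} (P : Set (Fin n → ℝ)) (a : Fin n → ℤ) (b : ℝ) : Prop :=
  IsPrimitive a ∧ (∀ x ∈ P, b ≤ iprod a x) ∧
  {x ∈ P | iprod a x = b}.Nonempty ∧
  Module.finrank ℝ ↥(vectorSpan ℝ {x ∈ P | iprod a x = b}) = n - 1

/-- The adjoint polytope `P^(s) = {x : ⟨a_F, x⟩ ≥ b_F + s for all facets F}`. -/
def adjointPoly {n : ℕ} (P : Set (Fin n → ℝ)) (s : ℝ) : Set (Fin n → ℝ) :=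
  {x | ∀ a b, IsFacetIneq P a b → b + s ≤ iprod a x}

/-- The set `{s > 0 : P^(s) ≠ ∅}`; the ℚ-codegree is `μ(P) = (sSup (muSet P))⁻¹`. -/
def muSet {n : ℕ} (P : Set (Fin n → ℝ)) : Set ℝ :=
  {s : ℝ | 0 < s ∧ (adjointPoly P s).Nonempty}

/-- `F` is a (nonempty, exposed) face of the polytope `P`; with `u = 0` this includes
`P` itself. -/
def IsFace {n : ℕ} (P F : Set (Fin n → ℝ)) : Prop :=
  F.Nonempty ∧ ∃ (u : (Fin n → ℝ) →ₗ[ℝ] ℝ) (c : ℝ),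
    (∀ x ∈ P, c ≤ u x) ∧ F = {x ∈ P | u x = c}

/-- The dimension of a face (or polytope): the rank of its direction vector space. -/
def fdim {n : ℕ} (F : Set (Fin n → ℝ)) : ℕ := Module.finrank ℝ ↥(vectorSpan ℝ F)

/-- `vol` is the relative lattice volume of `F`: the Lebesgue volume of the image of `F`
under an affine isomorphism of `aff F` with `ℝ^{dim F}` carrying `(aff F) ∩ ℤ^n` onto
`ℤ^{dim F}`. -/
def HasRelVol {n : ℕ} (F : Set (Fin n → ℝ)) (vol : ℝ) : Prop :=
  ∃ T : (Fin n → ℝ) →ᵃ[ℝ] (Fin (fdim F) → ℝ),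
    Set.BijOn T (affineSpan ℝ F : Set (Fin n → ℝ)) Set.univ ∧
    T '' ((affineSpan ℝ F : Set (Fin n → ℝ)) ∩ {x | IsLatticePt x}) = {y | IsLatticePt y} ∧
    vol = (volume (T '' F)).toReal

/-- The alternating face sum `Σ_F (-1)^{n - dim F} (dim F + 1)! Vol(F)`. -/
def faceSum {n : ℕ} (𝓕 : Finset (Set (Fin n → ℝ))) (volf : Set (Fin n → ℝ) → ℝ) : ℝ :=
  ∑ F ∈ 𝓕, (-1 : ℝ) ^ (n - fdim F) * (Nat.factorial (fdim F + 1) : ℝ) * volf F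

/-- The alternating sum over all nonempty faces of `P` of
`(-1)^{n - dim F} (dim F + 1)! Vol(F)` vanishes. -/
def FaceSumZero {n : ℕ} (P : Set (Fin n → ℝ)) : Prop :=
  ∃ (𝓕 : Finset (Set (Fin n → ℝ))) (volf : Set (Fin n → ℝ) → ℝ),
    (∀ F, F ∈ 𝓕 ↔ IsFace P F) ∧ (∀ F ∈ 𝓕, HasRelVol F (volf F)) ∧
    faceSum 𝓕 volf = 0

/-- A polytope `R ⊆ ℝ^n` (of dimension `d = fdim R`) is smooth: at each vertex there are
exactly `d` edges, whose primitive integer direction vectors form a ℤ-basis of the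
lattice `(vectorSpan R) ∩ ℤ^n`. -/
def IsSmoothPoly {n : ℕ} (R : Set (Fin n → ℝ)) : Prop :=
  ∀ v ∈ Set.extremePoints ℝ R,
    ∃ (w : Fin (fdim R) → (Fin n → ℤ)) (c : Fin (fdim R) → ℝ),
      (∀ i, 0 < c i) ∧ (∀ i, IsPrimitive (w i)) ∧
      LinearIndependent ℝ (fun i => ((fun j => ((w i j : ℝ))) : Fin n → ℝ)) ∧
      (∀ i, ((fun j => ((w i j : ℝ))) : Fin n → ℝ) ∈ vectorSpan ℝ R) ∧
      (∀ z : Fin n → ℤ, ((fun j => (z j : ℝ)) : Fin n → ℝ) ∈ vectorSpan ℝ R →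
        ∃ m : Fin (fdim R) → ℤ,
          ((fun j => (z j : ℝ)) : Fin n → ℝ) =
            ∑ i, (m i : ℝ) • ((fun j => ((w i j : ℝ))) : Fin n → ℝ)) ∧
      (∀ F : Set (Fin n → ℝ), (IsFace R F ∧ v ∈ F ∧ fdim F = 1) ↔
        ∃ i, F = segment ℝ v (v + c i • ((fun j => ((w i j : ℝ))) : Fin n → ℝ)))

/-- The real-linear map `ℝ^n → ℝ^t` induced by an integer matrix. -/
def matMap {t n : ℕ} (A : Matrix (Fin t) (Fin n) ℤ) : (Fin n → ℝ) → (Fin t → ℝ) :=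
  fun x k => ∑ j, (A k j : ℝ) * x j

/-- The piece `R_k = P ∩ π_ℝ^{-1}(v_k)` of a Cayley sum over the `k`-th vertex of `Δ_t`. -/
def cayleyPiece {t n : ℕ} (A : Matrix (Fin t) (Fin n) ℤ) (P : Set (Fin n → ℝ))
    (k : Fin (t + 1)) : Set (Fin n → ℝ) :=
  {x ∈ P | matMap A x = stdSimplexVert t k}

/-- Two polytopes are normally equivalent (have the same normal fan): for all linear
functionals `u, v`, the minimizing face of `u` equals that of `v` on `R` precisely when the
same holds on `S`. -/
def NormEquiv {n : ℕ} (R S : Set (Fin n → ℝ)) : Prop :=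
  ∀ u v : (Fin n → ℝ) →ₗ[ℝ] ℝ,
    ({x ∈ R | ∀ y ∈ R, u x ≤ u y} = {x ∈ R | ∀ y ∈ R, v x ≤ v y}) ↔
    ({x ∈ S | ∀ y ∈ S, u x ≤ u y} = {x ∈ S | ∀ y ∈ S, v x ≤ v y})

/-- `Q` is the Cayley sum, via the surjective lattice projection `A : ℤ^n → ℤ^t`, of the
normally equivalent polytopes `R_k = Q ∩ π_ℝ^{-1}(v_k)`: `π_ℝ` maps `Q` onto `Δ_t`. -/
def IsCayleyWith {n t : ℕ} (Q : Set (Fin n → ℝ)) (A : Matrix (Fin t) (Fin n) ℤ) : Prop :=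
  (∀ y : Fin t → ℤ, ∃ x : Fin n → ℤ, A.mulVec x = y) ∧
  matMap A '' Q = unimodSimplex t ∧
  ∀ k l : Fin (t + 1), NormEquiv (cayleyPiece A Q k) (cayleyPiece A Q l)

/-- The unimodular affine map `x ↦ Ux + w`. -/
def unimodMap {n : ℕ} (U : Matrix (Fin n) (Fin n) ℤ) (w : Fin n → ℤ) :
    (Fin n → ℝ) → (Fin n → ℝ) :=
  fun x i => (∑ j, (U i j : ℝ) * x j) + (w i : ℝ)

/-- The set `{s > 0 : P^(s) has the same normal fan as P}`; the nef value is
`τ(P) = (sSup (tauSet P))⁻¹`. -/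
def tauSet {n : ℕ} (P : Set (Fin n → ℝ)) : Set ℝ :=
  {s : ℝ | 0 < s ∧ NormEquiv (adjointPoly P s) P}


section Comb
variable {ι : Type*} [DecidableEq ι]

/-- alternating sum over subsets -/
def altA (G : Finset ι → ℝ) (s M : Finset ι) : ℝ :=
  ∑ t ∈ M.powerset, (-1 : ℝ) ^ t.card * G (s ∪ t)

lemma altA_empty (G : Finset ι → ℝ) (s : Finset ι) : altA G s ∅ = G s := by
  simp [altA]

lemma altA_insert (G : Finset ι → ℝ) (s M : Finset ι) (j : ι) (hj : j ∉ M) :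
    altA G s (insert j M) = altA G s M - altA G (insert j s) M := by
  unfold altA
  rw [Finset.sum_powerset_insert hj, sub_eq_add_neg, ← Finset.sum_neg_distrib]
  congr 1
  refine Finset.sum_congr rfl fun t ht => ?_
  have : j ∉ t := fun h => hj (Finset.mem_powerset.1 ht h)
  rw [Finset.card_insert_of_notMem this, Finset.union_insert, Finset.insert_union, pow_succ]
  ring

/-- key inequality -/
lemma altA_lower (G : Finset ι → ℝ) (s Mc M0 : Finset ι) (hd : Disjoint Mc M0)
    (h : ∀ j k M, j ∈ M0 → k ∈ M0 → j ≠ k → M ⊆ ((Mc ∪ M0).erase j).erase k →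
      M ⊆ Mc ∪ M0 → j ∉ M → k ∉ M → 0 ≤ altA G (insert k (insert j s)) M) :
    altA G s Mc - ∑ j ∈ M0, altA G (insert j s) Mc ≤ altA G s (Mc ∪ M0) := by
  have mono : ∀ j ∈ M0, ∀ M1 ⊆ M0, j ∉ M1 →
      altA G (insert j s) (Mc ∪ M1) ≤ altA G (insert j s) Mc := by
    intro j hj M1
    induction M1 using Finset.induction_on with
    | empty => intro _ _; simp
    | insert k M1 hk ih =>
      intro hsub hjM
      have hkM0 : k ∈ M0 := hsub (Finset.mem_insert_self _ _)
      have hM1 : M1 ⊆ M0 := (Finset.subset_insert _ _).trans hsub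
      have hjk : j ≠ k := fun e => hjM (by simp [e])
      have hjM1 : j ∉ M1 := fun e => hjM (by simp [e])
      have hkc : k ∉ Mc := fun e => Finset.disjoint_left.1 hd e hkM0
      have hjc : j ∉ Mc := fun e => Finset.disjoint_left.1 hd e hj
      have hkn : k ∉ Mc ∪ M1 := by simp [hkc, hk]
      have hjn : j ∉ Mc ∪ M1 := by simp [hjc, hjM1]
      have hss : Mc ∪ M1 ⊆ Mc ∪ M0 := Finset.union_subset_union_right hM1
      rw [Finset.union_insert, altA_insert _ _ _ _ hkn]
      have := h j k (Mc ∪ M1) hj hkM0 hjk (by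
        intro x hx
        simp only [Finset.mem_erase]
        exact ⟨fun e => hkn (e ▸ hx), fun e => hjn (e ▸ hx), hss hx⟩) hss hjn hkn
      linarith [ih hM1 hjM1]
  have key : ∀ M1 ⊆ M0, altA G s Mc - ∑ j ∈ M1, altA G (insert j s) Mc ≤ altA G s (Mc ∪ M1) := by
    intro M1
    induction M1 using Finset.induction_on with
    | empty => intro _; simp
    | insert k M1 hk ih =>
      intro hsub
      have hkM0 : k ∈ M0 := hsub (Finset.mem_insert_self _ _)
      have hM1 : M1 ⊆ M0 := (Finset.subset_insert _ _).trans hsub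
      have hkc : k ∉ Mc := fun e => Finset.disjoint_left.1 hd e hkM0
      rw [Finset.union_insert, altA_insert _ _ _ _ (by simp [hkc, hk]), Finset.sum_insert hk]
      linarith [ih hM1, mono k hkM0 M1 hM1 hk]
  exact key M0 subset_rfl

variable [Fintype ι]

structure CombData (n : ℕ) (g : Finset ι → ℝ) (Face : Finset ι → Prop) {V : Type*}
    (vert : V → Finset ι) (y : V → ι → ℝ) : Prop where
  card : ∀ c, (vert c).card = n
  g0 : ∀ s, 0 ≤ g s
  hy : ∀ c j, j ∉ vert c → 1 ≤ y c j
  rec' : ∀ c s, s ⊆ vert c → s.card < n → g s = ∑ j ∈ (vert c)ᶜ, y c j * g (insert j s)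
  down : ∀ s t, t ⊆ s → Face s → Face t
  nf : ∀ s, ¬ Face s → g s = 0
  fcard : ∀ s, Face s → s.card ≤ n
  ex : ∀ s M, Face s → s.card < n → s.card + M.card ≤ n → ∃ c, s ⊆ vert c ∧ (s ∪ (M ∩ vert c)).card < n
  ex1 : ∀ s, Face s → ∃ c, s ⊆ vert c

variable {n : ℕ} {g : Finset ι → ℝ} {Face : Finset ι → Prop} {V : Type*}
    {vert : V → Finset ι} {y : V → ι → ℝ}

lemma altA_zero_of_not_face (G : Finset ι → ℝ) (hG : ∀ s, ¬ Face s → G s = 0)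
    (hd : ∀ s t, t ⊆ s → Face s → Face t)
    (s M : Finset ι) (hs : ¬ Face s) : altA G s M = 0 := by
  refine Finset.sum_eq_zero fun t _ => ?_
  rw [hG _ (fun h => hs (hd _ _ Finset.subset_union_left h)), mul_zero]

lemma altA_step (G R : Finset ι → ℝ) (s Mc M0 c : Finset ι) (y : ι → ℝ)
    (hd : Disjoint Mc M0) (hM0 : M0 ⊆ cᶜ)
    (h : ∀ j k M, j ∈ M0 → k ∈ M0 → j ≠ k → M ⊆ ((Mc ∪ M0).erase j).erase k →
      M ⊆ Mc ∪ M0 → j ∉ M → k ∉ M → 0 ≤ altA G (insert k (insert j s)) M)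
    (hy : ∀ j, j ∉ c → 1 ≤ y j)
    (hrec : ∀ t, t ⊆ Mc → G (s ∪ t) = R (s ∪ t) + ∑ j ∈ cᶜ, y j * G (insert j (s ∪ t)))
    (hpos : ∀ j, j ∉ c → 0 ≤ altA G (insert j s) Mc)
    (hR : 0 ≤ altA R s Mc) : 0 ≤ altA G s (Mc ∪ M0) := by
  refine le_trans ?_ (altA_lower G s Mc M0 hd h)
  have e : altA G s Mc = altA R s Mc + ∑ j ∈ cᶜ, y j * altA G (insert j s) Mc := by
    unfold altA
    simp_rw [Finset.mul_sum]
    rw [Finset.sum_comm, ← Finset.sum_add_distrib]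
    refine Finset.sum_congr rfl fun t ht => ?_
    rw [hrec t (Finset.mem_powerset.1 ht), mul_add, Finset.mul_sum]
    congr 1
    refine Finset.sum_congr rfl fun j _ => ?_
    rw [Finset.insert_union]; ring
  rw [e]
  have h1 : ∑ j ∈ M0, altA G (insert j s) Mc ≤ ∑ j ∈ cᶜ, altA G (insert j s) Mc :=
    Finset.sum_le_sum_of_subset_of_nonneg hM0 fun j hj _ => hpos j (by simpa using hj)
  have h2 : ∑ j ∈ cᶜ, altA G (insert j s) Mc ≤ ∑ j ∈ cᶜ, y j * altA G (insert j s) Mc := by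
    refine Finset.sum_le_sum fun j hj => ?_
    have hj' : j ∉ c := by simpa using hj
    nlinarith [hpos j hj', hy j hj']
  linarith

lemma CombData.N_nonneg (H : CombData n g Face vert y) (k : ℕ) : ∀ s M : Finset ι,
    n - s.card ≤ k → s.card + M.card ≤ n → 0 ≤ altA g s M := by
  induction k with
  | zero =>
    intro s M h1 h2
    have : M = ∅ := by rw [← Finset.card_eq_zero]; omega
    rw [this, altA_empty]; exact H.g0 s
  | succ k ih =>
    intro s M h1 h2
    by_cases hs : Face s
    swap
    · rw [altA_zero_of_not_face g H.nf H.down s M hs]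
    rcases Nat.lt_or_ge s.card n with hsn | hsn
    swap
    · have : M = ∅ := by rw [← Finset.card_eq_zero]; omega
      rw [this, altA_empty]; exact H.g0 s
    obtain ⟨c, hsc, hc⟩ := H.ex s M hs hsn h2
    have hM : M = (M ∩ vert c) ∪ (M \ vert c) := by
      ext x; simp only [Finset.mem_union, Finset.mem_inter, Finset.mem_sdiff]; tauto
    rw [hM]
    have hcard : (M ∩ vert c).card + (M \ vert c).card = M.card :=
      Finset.card_inter_add_card_sdiff M (vert c)
    refine altA_step g (fun _ => 0) s _ _ (vert c) (y c) ?_ ?_ ?_ (H.hy c) ?_ ?_ ?_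
    · exact (Finset.disjoint_sdiff_inter M (vert c)).symm
    · intro x hx; simp at hx ⊢; exact hx.2
    · intro j k' M' hj hk hjk hM1 _ _ _
      rw [← hM] at hM1
      have hjs : j ∉ s := fun e => (Finset.mem_sdiff.1 hj).2 (hsc e)
      have hks : k' ∉ s := fun e => (Finset.mem_sdiff.1 hk).2 (hsc e)
      have c1 : (insert k' (insert j s)).card = s.card + 2 := by
        rw [Finset.card_insert_of_notMem, Finset.card_insert_of_notMem hjs]
        simp [hks, hjk.symm]
      have c2 := Finset.card_le_card hM1
      rw [Finset.card_erase_of_mem, Finset.card_erase_of_mem (Finset.mem_sdiff.1 hj).1] at c2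
      · have : 2 ≤ M.card := by
          have := Finset.one_lt_card.2 ⟨j, (Finset.mem_sdiff.1 hj).1, k',
            (Finset.mem_sdiff.1 hk).1, hjk⟩
          omega
        apply ih <;> omega
      · exact Finset.mem_erase.2 ⟨hjk.symm, (Finset.mem_sdiff.1 hk).1⟩
    · intro t ht
      rw [zero_add]
      refine H.rec' c _ (Finset.union_subset hsc (ht.trans Finset.inter_subset_right)) ?_
      exact lt_of_le_of_lt (Finset.card_le_card (Finset.union_subset_union_right ht)) hc
    · intro j hj
      by_cases hM0 : (M \ vert c).card = 0
      · -- then M ⊆ vert c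
        have hMM : M ∩ vert c = M := by
          apply Finset.eq_of_subset_of_card_le Finset.inter_subset_left; omega
        rw [hMM] at hc ⊢
        by_cases hlt : s.card + M.card < n
        · have : (insert j s).card = s.card + 1 :=
            Finset.card_insert_of_notMem (fun e => hj (hsc e))
          apply ih <;> omega
        · -- not disjoint: sum is zero
          have : ¬ Disjoint s M := by
            intro hd
            rw [Finset.card_union_of_disjoint hd] at hc; omega
          obtain ⟨a, has, haM⟩ := Finset.not_disjoint_iff.1 this
          have : altA g (insert j s) M = 0 := by
            rw [← Finset.insert_erase haM, altA_insert _ _ _ _ (Finset.notMem_erase a M),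
              Finset.insert_eq_of_mem (Finset.mem_insert_of_mem has), sub_self]
          rw [this]
      · have : (insert j s).card = s.card + 1 :=
            Finset.card_insert_of_notMem (fun e => hj (hsc e))
        apply ih <;> omega
    · simp [altA]

lemma CombData.D_nonneg (H : CombData n g Face vert y) (k : ℕ) : ∀ s M : Finset ι,
    n + 1 - s.card ≤ k → 0 ≤ altA (fun s => ((n : ℝ) + 1 - s.card) * g s) s M := by
  have hG : ∀ s, ¬ Face s → (fun s : Finset ι => ((n : ℝ) + 1 - s.card) * g s) s = 0 := by
    intro s hs; simp [H.nf s hs]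
  induction k with
  | zero =>
    intro s M h
    rw [altA_zero_of_not_face _ hG H.down]
    intro hs; have := H.fcard s hs; omega
  | succ k ih =>
    intro s M h1
    by_cases hs : Face s
    swap
    · rw [altA_zero_of_not_face _ hG H.down s M hs]
    have hsn := H.fcard s hs
    obtain ⟨c, hsc⟩ := H.ex1 s hs
    have hM : M = (M ∩ vert c) ∪ (M \ vert c) := by
      ext x; simp only [Finset.mem_union, Finset.mem_inter, Finset.mem_sdiff]; tauto
    have hR : 0 ≤ altA g s ((M ∩ vert c)) := by
      by_cases hd : Disjoint s (M ∩ vert c)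
      · refine H.N_nonneg n _ _ (by omega) ?_
        rw [← Finset.card_union_of_disjoint hd, ← H.card c]
        exact Finset.card_le_card (Finset.union_subset hsc Finset.inter_subset_right)
      · obtain ⟨a, has, haM⟩ := Finset.not_disjoint_iff.1 hd
        have : altA g s (M ∩ vert c) = 0 := by
          rw [← Finset.insert_erase haM, altA_insert _ _ _ _ (Finset.notMem_erase a _),
            Finset.insert_eq_of_mem has, sub_self]
        rw [this]
    rw [hM]
    refine altA_step _ g s _ _ (vert c) (y c) ?_ ?_ ?_ (H.hy c) ?_ ?_ hR
    · exact (Finset.disjoint_sdiff_inter M (vert c)).symm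
    · intro x hx; simp at hx ⊢; exact hx.2
    · intro j k' M' hj hk hjk _ _ _ _
      have hjs : j ∉ s := fun e => (Finset.mem_sdiff.1 hj).2 (hsc e)
      have hks : k' ∉ s := fun e => (Finset.mem_sdiff.1 hk).2 (hsc e)
      have c1 : (insert k' (insert j s)).card = s.card + 2 := by
        rw [Finset.card_insert_of_notMem, Finset.card_insert_of_notMem hjs]
        simp [hks, hjk.symm]
      apply ih; omega
    · intro t ht
      have hsub : s ∪ t ⊆ vert c := Finset.union_subset hsc (ht.trans Finset.inter_subset_right)
      have hle : (s ∪ t).card ≤ n := H.card c ▸ Finset.card_le_card hsub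
      rcases hle.lt_or_eq with hlt | heq
      · have hr := H.rec' c _ hsub hlt
        have : ∑ j ∈ (vert c)ᶜ, y c j * (((n : ℝ) + 1 - (insert j (s ∪ t)).card) *
            g (insert j (s ∪ t))) = ((n : ℝ) - (s ∪ t).card) *
            ∑ j ∈ (vert c)ᶜ, y c j * g (insert j (s ∪ t)) := by
          rw [Finset.mul_sum]
          refine Finset.sum_congr rfl fun j hj => ?_
          rw [Finset.card_insert_of_notMem (fun e => (Finset.mem_compl.1 hj) (hsub e))]
          push_cast; ring
        rw [this, ← hr]; ring
      · have : ∑ j ∈ (vert c)ᶜ, y c j * (((n : ℝ) + 1 - (insert j (s ∪ t)).card) *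
            g (insert j (s ∪ t))) = 0 := by
          refine Finset.sum_eq_zero fun j hj => ?_
          rw [Finset.card_insert_of_notMem (fun e => (Finset.mem_compl.1 hj) (hsub e)), heq]
          push_cast; ring
        rw [this, heq]; ring
    · intro j hj
      have : (insert j s).card = s.card + 1 :=
            Finset.card_insert_of_notMem (fun e => hj (hsc e))
      apply ih; omega

lemma CombData.main (H : CombData n g Face vert y) :
    0 ≤ ∑ s : Finset ι, (-1 : ℝ) ^ s.card * (((n : ℝ) + 1 - s.card) * g s) := by
  have := H.D_nonneg (n + 1) ∅ Finset.univ (by simp)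
  simpa [altA] using this

end Comb


lemma pyr_vol (d : ℕ) (B : Set (Fin d → ℝ)) (hB : IsCompact B) (p : Fin (d+1) → ℝ) (hp : 0 < p 0) :
    volume {x : Fin (d+1) → ℝ | ∃ z ∈ B, ∃ t ∈ Set.Icc (0:ℝ) 1,
      x = p + t • ((Fin.cons 0 z : Fin (d+1) → ℝ) - p)} =
      ENNReal.ofReal (p 0 / (d+1)) * volume B := by
  set S := {x : Fin (d+1) → ℝ | ∃ z ∈ B, ∃ t ∈ Set.Icc (0:ℝ) 1,
      x = p + t • ((Fin.cons 0 z : Fin (d+1) → ℝ) - p)} with hS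
  have hSc : IsCompact S := by
    have : S = (fun q : (Fin d → ℝ) × ℝ => p + q.2 • ((Fin.cons 0 q.1 : Fin (d+1) → ℝ) - p)) ''
        (B ×ˢ Set.Icc 0 1) := by
      ext x; constructor
      · rintro ⟨z, hz, t, ht, rfl⟩; exact ⟨(z, t), ⟨hz, ht⟩, rfl⟩
      · rintro ⟨⟨z, t⟩, ⟨hz, ht⟩, rfl⟩; exact ⟨z, hz, t, ht, rfl⟩
    rw [this]
    refine (hB.prod isCompact_Icc).image ?_
    have : Continuous fun q : (Fin d → ℝ) × ℝ => (Fin.cons 0 q.1 : Fin (d+1) → ℝ) := by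
      refine continuous_pi fun i => ?_
      refine Fin.cases ?_ (fun i => ?_) i
      · simpa using continuous_const
      · simp only [Fin.cons_succ]; fun_prop
    fun_prop
  set e := MeasurableEquiv.piFinSuccAbove (fun _ : Fin (d+1) => ℝ) 0 with he
  have hpres := volume_preserving_piFinSuccAbove (fun _ : Fin (d+1) => ℝ) 0
  have h1 : volume S = (volume : Measure (ℝ × (Fin d → ℝ))) (e.symm ⁻¹' S) :=
    ((hpres.symm e).measure_preimage_equiv S).symm
  have hmeas : MeasurableSet (e.symm ⁻¹' S) := e.symm.measurable hSc.isClosed.measurableSet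
  rw [h1, Measure.volume_eq_prod, Measure.prod_apply hmeas]
  have hslice : ∀ a : ℝ, a ≠ p 0 → volume (Prod.mk a ⁻¹' (e.symm ⁻¹' S)) =
      Set.indicator (Set.Icc 0 (p 0)) (fun a => ENNReal.ofReal ((1 - a / p 0) ^ d) * volume B) a := by
    intro a ha
    by_cases hmem : a ∈ Set.Icc 0 (p 0)
    · rw [Set.indicator_of_mem hmem]
      have hpos : 0 < 1 - a / p 0 := by
        rw [sub_pos, div_lt_one hp]; exact lt_of_le_of_ne hmem.2 ha
      have : (Prod.mk a ⁻¹' (e.symm ⁻¹' S)) =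
          (fun z => (a / p 0) • Fin.tail p + z) '' ((1 - a / p 0) • B) := by
        ext z
        simp only [Set.mem_preimage, Set.mem_image, Set.mem_smul_set, hS, Set.mem_ofPred_eq]
        have es : e.symm (a, z) = Fin.cons a z := by
          simp [he, MeasurableEquiv.piFinSuccAbove]; rfl
        rw [es]
        constructor
        · rintro ⟨z', hz', t, ht, h⟩
          have h0 : a = p 0 + t * (0 - p 0) := by simpa using congrFun h 0
          have ht' : t = 1 - a / p 0 := by field_simp; linarith
          refine ⟨_, ⟨z', hz', rfl⟩, ?_⟩
          ext i
          have := congrFun h i.succ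
          simp only [Fin.cons_succ, Pi.add_apply, Pi.smul_apply, Pi.sub_apply, smul_eq_mul] at this
          simp only [Pi.add_apply, Pi.smul_apply, smul_eq_mul, Fin.tail]
          rw [this, ht']; ring
        · rintro ⟨_, ⟨z', hz', rfl⟩, rfl⟩
          refine ⟨z', hz', 1 - a / p 0, ⟨hpos.le, ?_⟩, ?_⟩
          · have := div_nonneg hmem.1 hp.le; linarith
          · ext i
            refine Fin.cases ?_ (fun i => ?_) i
            · simp; field_simp; ring
            · simp [Fin.tail]; ring
      rw [this, Set.image_add_left, measure_preimage_add, Measure.addHaar_smul]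
      simp only [Module.finrank_fintype_fun_eq_card, Fintype.card_fin]
      rw [abs_of_nonneg (by positivity)]
    · rw [Set.indicator_of_notMem hmem]
      have : (Prod.mk a ⁻¹' (e.symm ⁻¹' S)) = ∅ := by
        ext z
        simp only [Set.mem_preimage, hS, Set.mem_ofPred_eq, Set.mem_empty_iff_false, iff_false]
        have es : e.symm (a, z) = Fin.cons a z := by
          simp [he, MeasurableEquiv.piFinSuccAbove]; rfl
        rw [es]
        rintro ⟨z', hz', t, ht, h⟩
        have h0 : a = p 0 + t * (0 - p 0) := by simpa using congrFun h 0
        apply hmem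
        constructor <;> nlinarith [ht.1, ht.2]
      rw [this, measure_empty]
  have hae : ∀ᵐ a : ℝ, volume (Prod.mk a ⁻¹' (e.symm ⁻¹' S)) =
      Set.indicator (Set.Icc 0 (p 0)) (fun a => ENNReal.ofReal ((1 - a / p 0) ^ d) * volume B) a := by
    have : ∀ᵐ a : ℝ, a ≠ p 0 := by
      simp [ae_iff]
    filter_upwards [this] with a ha using hslice a ha
  rw [lintegral_congr_ae hae, lintegral_indicator measurableSet_Icc, lintegral_mul_const _ (by fun_prop)]
  congr 1
  rw [← ofReal_integral_eq_lintegral_ofReal]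
  · congr 1
    rw [integral_Icc_eq_integral_Ioc, ← intervalIntegral.integral_of_le hp.le]
    have := intervalIntegral.integral_comp_sub_div (a := 0) (b := p 0) (fun x : ℝ => x ^ d) hp.ne' 1
    rw [this]
    simp [hp.ne']
    ring
  · refine (ContinuousOn.integrableOn_Icc ?_)
    fun_prop
  · refine (ae_restrict_iff' measurableSet_Icc).2 (Filter.Eventually.of_forall fun a ha => ?_)
    have : 0 ≤ 1 - a / p 0 := by
      rw [sub_nonneg, div_le_one hp]; exact ha.2
    positivity

/-- unimodular affine maps preserve volume -/
lemma unimod_vol (d : ℕ) (φ : (Fin d → ℝ) →ᵃ[ℝ] (Fin d → ℝ))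
    (h1 : ∀ y : Fin d → ℝ, (∀ i, ∃ z : ℤ, y i = z) → ∀ i, ∃ z : ℤ, φ y i = z)
    (h2 : ∀ y' : Fin d → ℝ, (∀ i, ∃ z : ℤ, y' i = z) → ∃ y : Fin d → ℝ, (∀ i, ∃ z : ℤ, y i = (z : ℝ)) ∧ φ y = y')
    (A : Set (Fin d → ℝ)) : volume (φ '' A) = volume A := by
  obtain ⟨b, hb⟩ : ∃ b, b = φ 0 := ⟨_, rfl⟩
  have hφ : ∀ y, φ y = φ.linear y + b := by
    intro y; rw [hb]; exact congrFun (AffineMap.decomp φ) y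
  have hbz : ∀ i, ∃ z : ℤ, b i = z := by
    rw [hb]; exact h1 0 fun i => ⟨0, by simp⟩
  have hM : ∀ k i, ∃ z : ℤ, φ.linear (Pi.single k 1) i = z := by
    intro k i
    obtain ⟨z, hz⟩ := h1 (Pi.single k 1) (fun i => ⟨(Pi.single k 1 : Fin d → ℤ) i, by
      by_cases h : i = k
      · subst h; simp
      · simp [h]⟩) i
    obtain ⟨z', hz'⟩ := hbz i
    rw [hφ, Pi.add_apply, hz'] at hz
    exact ⟨z - z', by push_cast; linarith⟩
  have hN : ∀ k : Fin d, ∃ y : Fin d → ℤ, φ.linear (fun i => (y i : ℝ)) = Pi.single k 1 := by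
    intro k
    obtain ⟨y, hy, hy'⟩ := h2 (b + Pi.single k 1) (fun i => by
      obtain ⟨z', hz'⟩ := hbz i
      refine ⟨z' + (Pi.single k 1 : Fin d → ℤ) i, ?_⟩
      by_cases h : i = k
      · subst h; simp [hz']
      · simp [h, hz'])
    choose z hz using hy
    refine ⟨z, ?_⟩
    have : y = fun i => (z i : ℝ) := funext hz
    rw [← this]
    rw [hφ, add_comm] at hy'
    exact add_left_cancel hy'
  choose M hM using hM
  choose N hN using hN
  set MM : Matrix (Fin d) (Fin d) ℤ := fun i k => M k i
  set NN : Matrix (Fin d) (Fin d) ℤ := fun i k => N k i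
  have hlin : ∀ y i, φ.linear y i = ∑ k, (M k i : ℝ) * y k := by
    intro y i
    conv_lhs => rw [pi_eq_sum_univ' y, map_sum]
    rw [Finset.sum_apply]
    refine Finset.sum_congr rfl fun k _ => ?_
    rw [map_smul, Pi.smul_apply, smul_eq_mul, ← hM]
    have : (Pi.single k 1 : Fin d → ℝ) = fun j => if k = j then 1 else 0 := by
      ext j; simp [Pi.single_apply, eq_comm]
    rw [this]
    ring
  have hMN : MM * NN = 1 := by
    ext i k
    have := congrFun (hN k) i
    rw [hlin] at this
    rw [Matrix.mul_apply, Matrix.one_apply]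
    have h3 : ((∑ j, MM i j * NN j k : ℤ) : ℝ) = ((if i = k then 1 else 0 : ℤ) : ℝ) := by
      push_cast
      simp only [MM, NN]
      rw [this, Pi.single_apply]
    exact_mod_cast h3
  have hdet : IsUnit MM.det := by
    have := congrArg Matrix.det hMN
    rw [Matrix.det_mul, Matrix.det_one] at this
    exact IsUnit.of_mul_eq_one _ this
  have hL : φ.linear = Matrix.toLin' (MM.map (Int.cast : ℤ → ℝ)) := by
    ext1 k
    ext
    simp [hlin, Matrix.toLin'_apply, Matrix.mulVec, dotProduct, MM, Matrix.map_apply, Matrix.of_apply]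
    rfl
  have hdL : |LinearMap.det φ.linear| = 1 := by
    rw [hL, LinearMap.det_toLin']
    have : (MM.map (Int.cast : ℤ → ℝ)).det = (MM.det : ℝ) := by
      have := (RingHom.map_det (Int.castRingHom ℝ) MM).symm
      simpa using this
    rw [this]
    rcases Int.isUnit_iff.1 hdet with h | h <;> simp [h]
  have himg : φ '' A = (fun x => b + x) '' (φ.linear '' A) := by
    rw [Set.image_image]
    refine Set.image_congr fun y _ => ?_
    rw [hφ, add_comm]
  rw [himg, Set.image_add_left, measure_preimage_add, Measure.addHaar_image_linearMap, hdL]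
  simp


/-! ### Smooth systems of inequalities -/

/-- cast of an integer vector -/
def cz {n : ℕ} (w : Fin n → ℤ) : Fin n → ℝ := fun j => (w j : ℝ)

lemma iprod_add {n : ℕ} (a : Fin n → ℤ) (x y : Fin n → ℝ) :
    iprod a (x + y) = iprod a x + iprod a y := by
  simp [iprod, mul_add, Finset.sum_add_distrib]

lemma iprod_smul {n : ℕ} (a : Fin n → ℤ) (t : ℝ) (x : Fin n → ℝ) :
    iprod a (t • x) = t * iprod a x := by
  simp only [iprod, Pi.smul_apply, smul_eq_mul, Finset.mul_sum]
  exact Finset.sum_congr rfl fun _ _ => by ring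

/-- `iprod` as a linear map -/
def lf {n : ℕ} (a : Fin n → ℤ) : (Fin n → ℝ) →ₗ[ℝ] ℝ where
  toFun := iprod a
  map_add' := iprod_add a
  map_smul' := iprod_smul a

@[simp] lemma lf_apply {n : ℕ} (a : Fin n → ℤ) (x : Fin n → ℝ) : lf a x = iprod a x := rfl

lemma iprod_cz {n : ℕ} (a w : Fin n → ℤ) : iprod a (cz w) = ((∑ i, a i * w i : ℤ) : ℝ) := by
  simp [iprod, cz]

lemma iprod_lattice {n : ℕ} (a : Fin n → ℤ) (x : Fin n → ℝ) (hx : IsLatticePt x) :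
    ∃ z : ℤ, iprod a x = z := by
  choose w hw using hx
  have : x = cz w := funext hw
  exact ⟨_, this ▸ iprod_cz a w⟩

structure Sys (n : ℕ) (ι : Type) [Fintype ι] [DecidableEq ι] (P : Set (Fin n → ℝ)) where
  a : ι → Fin n → ℤ
  b : ι → ℤ
  W : (Fin n → ℝ) → ι → Fin n → ℤ
  mem : ∀ x, x ∈ P ↔ ∀ i, 0 ≤ iprod (a i) x - b i
  cpt : IsCompact P
  ne : P.Nonempty
  lat : ∀ v ∈ P.extremePoints ℝ, IsLatticePt v
  dual : ∀ v ∈ P.extremePoints ℝ, ∀ i j, iprod (a i) v = b i → iprod (a j) v = b j →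
    iprod (a i) (cz (W v j)) = if i = j then 1 else 0
  expand : ∀ v ∈ P.extremePoints ℝ, ∀ x, x = v + ∑ i with iprod (a i) v = b i,
    (iprod (a i) x - b i) • cz (W v i)
  card : ∀ v ∈ P.extremePoints ℝ, (Finset.univ.filter fun i => iprod (a i) v = b i).card = n

namespace Sys
variable {n : ℕ} {ι : Type} [Fintype ι] [DecidableEq ι] {P : Set (Fin n → ℝ)} (S : Sys n ι P)

/-- the affine forms -/
def L (i : ι) (x : Fin n → ℝ) : ℝ := iprod (S.a i) x - S.b i

lemma L_line (i : ι) (x y : Fin n → ℝ) (t : ℝ) :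
    S.L i (x + t • y) = S.L i x + t * iprod (S.a i) y := by
  simp [L, iprod_add, iprod_smul]; ring

lemma L_comb (i : ι) (x y : Fin n → ℝ) (s t : ℝ) (h : s + t = 1) :
    S.L i (s • x + t • y) = s * S.L i x + t * S.L i y := by
  simp only [L, iprod_add, iprod_smul]
  linear_combination ((S.b i : ℝ)) * h

lemma L_cont (i : ι) : Continuous (S.L i) := by
  unfold L iprod; fun_prop

/-- active set -/
def act (v : Fin n → ℝ) : Finset ι := Finset.univ.filter fun i => iprod (S.a i) v = S.b i

lemma mem_act {v : Fin n → ℝ} {i : ι} : i ∈ S.act v ↔ S.L i v = 0 := by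
  simp [act, L, sub_eq_zero]

lemma memL {x : Fin n → ℝ} : x ∈ P ↔ ∀ i, 0 ≤ S.L i x := S.mem x

/-- solution subspace -/
def HS (s : Finset ι) : Set (Fin n → ℝ) := {x | ∀ i ∈ s, S.L i x = 0}

/-- face -/
def PS (s : Finset ι) : Set (Fin n → ℝ) := {x | x ∈ P ∧ ∀ i ∈ s, S.L i x = 0}

lemma PS_sub_HS (s : Finset ι) : S.PS s ⊆ S.HS s := fun _ h => h.2

lemma PS_compact (s : Finset ι) : IsCompact (S.PS s) := by
  have : S.PS s = P ∩ ⋂ i ∈ s, {x | S.L i x = 0} := by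
    ext x; simp [PS]
  rw [this]
  refine S.cpt.inter_right ?_
  exact isClosed_biInter fun i _ => isClosed_eq (S.L_cont i) continuous_const

lemma PS_convex (s : Finset ι) : Convex ℝ (S.PS s) := by
  intro x hx y hy p q hp hq hpq
  refine ⟨S.memL.2 fun i => ?_, fun i hi => ?_⟩
  · rw [S.L_comb i x y p q hpq]
    have h1 := S.memL.1 hx.1 i
    have h2 := S.memL.1 hy.1 i
    positivity
  · rw [S.L_comb i x y p q hpq, hx.2 i hi, hy.2 i hi]; simp

lemma PS_extreme (s : Finset ι) : IsExtreme ℝ P (S.PS s) := by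
  refine ⟨fun x hx => hx.1, ?_⟩
  intro x hx y hy z hz hzo
  obtain ⟨p, q, hp, hq, hpq, rfl⟩ := hzo
  refine ⟨hx, fun i hi => ?_⟩
  have h := hz.2 i hi
  rw [S.L_comb i x y p q hpq] at h
  have h1 := S.memL.1 hx i
  have h2 := S.memL.1 hy i
  have h3 := mul_nonneg hq.le h2
  have h4 := mul_nonneg hp.le h1
  have : p * S.L i x = 0 := by linarith
  rcases mul_eq_zero.1 this with h | h
  · exact absurd h hp.ne'
  · exact h

lemma exists_vert (s : Finset ι) (h : (S.PS s).Nonempty) :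
    ∃ v ∈ P.extremePoints ℝ, v ∈ S.PS s := by
  obtain ⟨v, hv⟩ := (S.PS_compact s).extremePoints_nonempty h
  exact ⟨v, (S.PS_extreme s).extremePoints_subset_extremePoints hv, hv.1⟩

lemma sub_act {s : Finset ι} {v : Fin n → ℝ} (h : v ∈ S.PS s) : s ⊆ S.act v :=
  fun i hi => S.mem_act.2 (h.2 i hi)

lemma mem_PS_of_sub {s : Finset ι} {v : Fin n → ℝ} (hv : v ∈ P) (h : s ⊆ S.act v) : v ∈ S.PS s :=
  ⟨hv, fun _ hi => S.mem_act.1 (h hi)⟩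

variable {v : Fin n → ℝ}

lemma dual' (hv : v ∈ P.extremePoints ℝ) {i j : ι} (hi : i ∈ S.act v) (hj : j ∈ S.act v) :
    iprod (S.a i) (cz (S.W v j)) = if i = j then 1 else 0 :=
  S.dual v hv i j (by simpa [act] using hi) (by simpa [act] using hj)

lemma expand' (hv : v ∈ P.extremePoints ℝ) (x : Fin n → ℝ) :
    x = v + ∑ i ∈ S.act v, S.L i x • cz (S.W v i) := S.expand v hv x

lemma act_inj {v' : Fin n → ℝ} (hv : v ∈ P.extremePoints ℝ)
    (h : S.act v ⊆ S.act v') : v' = v := by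
  rw [S.expand' hv v', Finset.sum_eq_zero, add_zero]
  intro i hi
  rw [S.mem_act.1 (h hi), zero_smul]

lemma exists_eps (hv : v ∈ P.extremePoints ℝ) :
    ∃ ε : ℝ, 0 < ε ∧ ∀ i ∈ S.act v, v + ε • cz (S.W v i) ∈ P := by
  have : ∀ᶠ ε : ℝ in nhdsWithin 0 (Set.Ioi 0), ∀ i ∈ S.act v, ∀ j,
      0 ≤ S.L j (v + ε • cz (S.W v i)) := by
    rw [Filter.eventually_all_finset]
    intro i hi
    rw [Filter.eventually_all]
    intro j
    by_cases hj : j ∈ S.act v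
    · filter_upwards [self_mem_nhdsWithin] with ε hε
      have hε' : (0:ℝ) < ε := hε
      rw [S.L_line, S.mem_act.1 hj, S.dual' hv hj hi]
      split_ifs <;> simp [hε'.le]
    · have h0 : 0 < S.L j v :=
        lt_of_le_of_ne (S.memL.1 hv.1 j) (fun h => hj (S.mem_act.2 h.symm))
      have hc : Continuous fun ε : ℝ => S.L j (v + ε • cz (S.W v i)) :=
        (S.L_cont j).comp (by fun_prop)
      have : ∀ᶠ ε : ℝ in nhds 0, 0 < S.L j (v + ε • cz (S.W v i)) :=
        hc.continuousAt.eventually (lt_mem_nhds (by simpa using h0))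
      filter_upwards [nhdsWithin_le_nhds this] with ε hε using hε.le
  obtain ⟨ε, h1, h2⟩ := (this.and self_mem_nhdsWithin).exists
  exact ⟨ε, h2, fun i hi => S.memL.2 (h1 i hi)⟩

lemma step_mem {s : Finset ι} (hv : v ∈ P.extremePoints ℝ) (hs : s ⊆ S.act v) {i : ι}
    (hi : i ∈ S.act v) (his : i ∉ s) {ε : ℝ} (h : v + ε • cz (S.W v i) ∈ P) :
    v + ε • cz (S.W v i) ∈ S.PS s := by
  refine ⟨h, fun j hj => ?_⟩
  have hne : j ≠ i := fun h => his (h ▸ hj)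
  rw [S.L_line, S.mem_act.1 (hs hj), S.dual' hv (hs hj) hi, if_neg hne]
  simp

lemma W_indep (hv : v ∈ P.extremePoints ℝ) (s : Finset ι) :
    LinearIndependent ℝ (fun i : ↥(S.act v \ s) => cz (S.W v i)) := by
  rw [Fintype.linearIndependent_iff]
  intro g hg i
  have h := congrArg (lf (S.a i)) hg
  have hi : (i : ι) ∈ S.act v := (Finset.mem_sdiff.1 i.2).1
  rw [map_sum, map_zero, Finset.sum_eq_single i] at h
  · simpa [S.dual' hv hi hi] using h
  · intro j _ hji
    have hj : (j : ι) ∈ S.act v := (Finset.mem_sdiff.1 j.2).1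
    have : (i : ι) ≠ j := fun e => hji (Subtype.ext e.symm)
    simp [S.dual' hv hi hj, this]
  · intro h; exact absurd (Finset.mem_univ _) h

lemma vectorSpan_PS {s : Finset ι} (hv : v ∈ P.extremePoints ℝ) (hs : s ⊆ S.act v) :
    vectorSpan ℝ (S.PS s) =
      Submodule.span ℝ (Set.range fun i : ↥(S.act v \ s) => cz (S.W v i)) := by
  apply le_antisymm
  · rw [vectorSpan_def, Submodule.span_le]
    rintro _ ⟨x, hx, y, hy, rfl⟩
    simp only [vsub_eq_sub, SetLike.mem_coe]
    rw [S.expand' hv x, S.expand' hv y, add_sub_add_left_eq_sub, ← Finset.sum_sub_distrib]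
    refine Submodule.sum_mem _ fun i hi => ?_
    rw [← sub_smul]
    by_cases his : i ∈ s
    · rw [hx.2 i his, hy.2 i his]; simp
    · exact Submodule.smul_mem _ _
        (Submodule.subset_span ⟨⟨i, Finset.mem_sdiff.2 ⟨hi, his⟩⟩, rfl⟩)
  · rw [Submodule.span_le]
    rintro _ ⟨⟨i, hi⟩, rfl⟩
    rw [Finset.mem_sdiff] at hi
    obtain ⟨ε, hε, h⟩ := S.exists_eps hv
    have h1 := S.step_mem hv hs hi.1 hi.2 (h i hi.1)
    have h2 := vsub_mem_vectorSpan ℝ h1 (S.mem_PS_of_sub hv.1 hs)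
    simp only [vsub_eq_sub, add_sub_cancel_left] at h2
    have := Submodule.smul_mem _ ε⁻¹ h2
    rwa [smul_smul, inv_mul_cancel₀ hε.ne', one_smul] at this

lemma fdim_PS {s : Finset ι} (hv : v ∈ P.extremePoints ℝ) (hs : s ⊆ S.act v) :
    fdim (S.PS s) = n - s.card := by
  unfold fdim
  rw [S.vectorSpan_PS hv hs, finrank_span_eq_card (S.W_indep hv s), Fintype.card_coe,
    Finset.card_sdiff_of_subset hs]
  congr 1
  exact S.card v hv

lemma affineSpan_PS {s : Finset ι} (hv : v ∈ P.extremePoints ℝ) (hs : s ⊆ S.act v) :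
    (affineSpan ℝ (S.PS s) : Set (Fin n → ℝ)) = S.HS s := by
  have hvm : v ∈ affineSpan ℝ (S.PS s) := subset_affineSpan ℝ _ (S.mem_PS_of_sub hv.1 hs)
  ext x
  rw [SetLike.mem_coe, ← AffineSubspace.vsub_right_mem_direction_iff_mem hvm,
    direction_affineSpan, S.vectorSpan_PS hv hs, vsub_eq_sub]
  constructor
  · intro h i hi
    have : ∀ y ∈ Submodule.span ℝ (Set.range fun i : ↥(S.act v \ s) => cz (S.W v i)),
        lf (S.a i) y = 0 := by
      intro y hy
      have : Submodule.span ℝ (Set.range fun i : ↥(S.act v \ s) => cz (S.W v i)) ≤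
          LinearMap.ker (lf (S.a i)) := by
        rw [Submodule.span_le]
        rintro _ ⟨⟨j, hj⟩, rfl⟩
        rw [Finset.mem_sdiff] at hj
        have : i ≠ j := fun e => hj.2 (e ▸ hi)
        simp [S.dual' hv (hs hi) hj.1, this]
      exact this hy
    have h1 := this _ h
    have h2 := S.L_line i v (x - v) 1
    rw [one_smul, add_sub_cancel, S.mem_act.1 (hs hi)] at h2
    rw [h2]; rw [lf_apply] at h1; rw [h1]; simp
  · intro hx
    rw [S.expand' hv x, add_sub_cancel_left]
    refine Submodule.sum_mem _ fun i hi => ?_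
    by_cases his : i ∈ s
    · rw [hx i his]; simp
    · exact Submodule.smul_mem _ _
        (Submodule.subset_span ⟨⟨i, Finset.mem_sdiff.2 ⟨hi, his⟩⟩, rfl⟩)

/-- a chart for the face `s` at the vertex `v` -/
structure IsChart (v : Fin n → ℝ) (s : Finset ι) (d : ℕ) (e : Fin d → ι) : Prop where
  inj : Function.Injective e
  range : ∀ i, (∃ k, e k = i) ↔ i ∈ S.act v ∧ i ∉ s

lemma exists_chart (v : Fin n → ℝ) (s : Finset ι) (d : ℕ) (h : (S.act v \ s).card = d) :
    ∃ e : Fin d → ι, S.IsChart v s d e := by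
  let E := Finset.equivFinOfCardEq h
  refine ⟨fun k => (E.symm k : ι), ?_, ?_⟩
  · exact Subtype.val_injective.comp E.symm.injective
  · intro i
    rw [← Finset.mem_sdiff]
    constructor
    · rintro ⟨k, rfl⟩; exact (E.symm k).2
    · intro hi; exact ⟨E ⟨i, hi⟩, by simp⟩

/-- chart map -/
def ch {d : ℕ} (e : Fin d → ι) (x : Fin n → ℝ) : Fin d → ℝ := fun k => S.L (e k) x

/-- inverse chart map -/
def sg (v : Fin n → ℝ) {d : ℕ} (e : Fin d → ι) : (Fin d → ℝ) →ᵃ[ℝ] (Fin n → ℝ) :=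
  (Fintype.linearCombination ℝ (fun k => cz (S.W v (e k)))).toAffineMap + AffineMap.const ℝ _ v

lemma sg_apply {d : ℕ} (e : Fin d → ι) (y : Fin d → ℝ) :
    S.sg v e y = v + ∑ k, y k • cz (S.W v (e k)) := by
  simp [sg, Fintype.linearCombination_apply, add_comm]

lemma ch_cont {d : ℕ} (e : Fin d → ι) : Continuous (S.ch e) :=
  continuous_pi fun k => S.L_cont (e k)

variable {s : Finset ι} {d : ℕ} {e : Fin d → ι}

lemma L_sg (hv : v ∈ P.extremePoints ℝ) (he : S.IsChart v s d e) {i : ι} (hi : i ∈ S.act v)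
    (y : Fin d → ℝ) : S.L i (S.sg v e y) = ∑ k, if i = e k then y k else 0 := by
  have h := S.L_line i v (∑ k, y k • cz (S.W v (e k))) 1
  rw [one_smul] at h
  rw [sg_apply, h, S.mem_act.1 hi, ← lf_apply, map_sum, zero_add, one_mul]
  refine Finset.sum_congr rfl fun k _ => ?_
  have hk : e k ∈ S.act v := ((he.range _).1 ⟨k, rfl⟩).1
  rw [map_smul, lf_apply, S.dual' hv hi hk]
  split_ifs <;> simp

lemma ch_sg (hv : v ∈ P.extremePoints ℝ) (he : S.IsChart v s d e) (y : Fin d → ℝ) :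
    S.ch e (S.sg v e y) = y := by
  ext k
  have hk : e k ∈ S.act v := ((he.range _).1 ⟨k, rfl⟩).1
  rw [ch, S.L_sg hv he hk]
  simp [he.inj.eq_iff]

lemma sg_mem (hv : v ∈ P.extremePoints ℝ) (hs : s ⊆ S.act v) (he : S.IsChart v s d e)
    (y : Fin d → ℝ) : S.sg v e y ∈ S.HS s := by
  intro i hi
  rw [S.L_sg hv he (hs hi)]
  refine Finset.sum_eq_zero fun k _ => if_neg ?_
  rintro rfl
  exact ((he.range _).1 ⟨k, rfl⟩).2 hi

lemma sg_ch (hv : v ∈ P.extremePoints ℝ) (hs : s ⊆ S.act v) (he : S.IsChart v s d e)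
    {x : Fin n → ℝ} (hx : x ∈ S.HS s) : S.sg v e (S.ch e x) = x := by
  rw [sg_apply]
  conv_rhs => rw [S.expand' hv x]
  congr 1
  rw [← Finset.sum_sdiff hs, Finset.sum_eq_zero (s := s), add_zero]
  · symm
    refine Finset.sum_bij' (M := Fin n → ℝ) (fun i hi => ((he.range i).2 (Finset.mem_sdiff.1 hi)).choose)
      (fun k _ => e k) (fun _ _ => Finset.mem_univ _) ?_ ?_ ?_ ?_
    · intro k _; exact Finset.mem_sdiff.2 ((he.range _).1 ⟨k, rfl⟩)
    · intro i hi; exact ((he.range i).2 (Finset.mem_sdiff.1 hi)).choose_spec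
    · intro k _
      exact he.inj (((he.range (e k)).2 ((he.range _).1 ⟨k, rfl⟩)).choose_spec)
    · intro i hi
      have := ((he.range i).2 (Finset.mem_sdiff.1 hi)).choose_spec
      simp only [ch]; rw [this]
  · intro i hi; rw [hx i hi, zero_smul]

lemma ch_lat (x : Fin n → ℝ) (hx : IsLatticePt x) (e : Fin d → ι) : IsLatticePt (S.ch e x) := by
  intro k
  obtain ⟨z, hz⟩ := iprod_lattice (S.a (e k)) x hx
  exact ⟨z - S.b (e k), by simp [ch, L, hz]⟩

lemma sg_lat (hv : v ∈ P.extremePoints ℝ) (y : Fin d → ℝ) (hy : IsLatticePt y) (e : Fin d → ι) :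
    IsLatticePt (S.sg v e y) := by
  choose z hz using hy
  choose w hw using S.lat v hv
  intro i
  refine ⟨w i + ∑ k, z k * S.W v (e k) i, ?_⟩
  rw [sg_apply, Pi.add_apply, hw, Finset.sum_apply]
  push_cast
  congr 1
  exact Finset.sum_congr rfl fun k _ => by simp [hz, cz]

/-- Any relative volume agrees with chart volumes. -/
lemma relVol_chart (hv : v ∈ P.extremePoints ℝ) (hs : s ⊆ S.act v) (hd : n - s.card = d) {vol : ℝ}
    (h : HasRelVol (S.PS s) vol) : ∃ μ : Set (Fin n → ℝ) → ENNReal, vol = (μ (S.PS s)).toReal ∧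
      ∀ v ∈ P.extremePoints ℝ, s ⊆ S.act v → ∀ e : Fin d → ι, S.IsChart v s d e →
        ∀ A ⊆ S.HS s, volume (S.ch e '' A) = μ A := by
  have hfd : fdim (S.PS s) = d := (S.fdim_PS hv hs).trans hd
  have key : ∃ T : (Fin n → ℝ) →ᵃ[ℝ] (Fin d → ℝ),
    T '' ((affineSpan ℝ (S.PS s) : Set (Fin n → ℝ)) ∩ {x | IsLatticePt x}) = {y | IsLatticePt y} ∧
    vol = (volume (T '' (S.PS s))).toReal := by
    unfold HasRelVol at h
    rw [hfd] at h
    obtain ⟨T, _, h2, h3⟩ := h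
    exact ⟨T, h2, h3⟩
  obtain ⟨T, hT, hvol⟩ := key
  rw [S.affineSpan_PS hv hs] at hT
  refine ⟨fun A => volume (T '' A), hvol, ?_⟩
  intro v hv hs e he A hA
  have himg : T '' A = (T.comp (S.sg v e)) '' (S.ch e '' A) := by
    rw [Set.image_image]
    refine Set.image_congr fun x hx => ?_
    rw [AffineMap.comp_apply, S.sg_ch hv hs he (hA hx)]
  dsimp only
  rw [himg]
  symm
  apply unimod_vol
  · intro y hy
    have : T (S.sg v e y) ∈ T '' (S.HS s ∩ {x | IsLatticePt x}) :=
      ⟨_, ⟨S.sg_mem hv hs he y, S.sg_lat hv y hy e⟩, rfl⟩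
    rw [hT] at this
    exact this
  · intro y' hy'
    have : y' ∈ T '' (S.HS s ∩ {x | IsLatticePt x}) := by rw [hT]; exact hy'
    obtain ⟨x, ⟨hx1, hx2⟩, rfl⟩ := this
    exact ⟨S.ch e x, S.ch_lat x hx2 e, by rw [AffineMap.comp_apply, S.sg_ch hv hs he hx1]⟩


end Sys

namespace Sys
variable {n : ℕ} {ι : Type} [Fintype ι] [DecidableEq ι] {P : Set (Fin n → ℝ)} (S : Sys n ι P)
variable {c : Fin n → ℝ} {s : Finset ι} {d : ℕ}

/-- pyramid with apex `c` over the facet `j` of the face `s` -/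
def pyr (s : Finset ι) (c : Fin n → ℝ) (j : ι) : Set (Fin n → ℝ) :=
  {x | ∃ z ∈ S.PS (insert j s), ∃ t ∈ Set.Icc (0:ℝ) 1, x = c + t • (z - c)}

lemma L_seg (i : ι) (x y : Fin n → ℝ) (t : ℝ) :
    S.L i (x + t • (y - x)) = S.L i x + t * (S.L i y - S.L i x) := by
  have : x + t • (y - x) = (1 - t) • x + t • y := by
    rw [sub_smul, smul_sub, one_smul]; abel
  rw [this, S.L_comb _ _ _ _ _ (by ring)]; ring

lemma L_pos (hc : c ∈ P) {j : ι} (hj : j ∉ S.act c) : 0 < S.L j c :=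
  lt_of_le_of_ne (S.memL.1 hc j) (fun h => hj (S.mem_act.2 h.symm))

lemma L_ge_one (hc : c ∈ P.extremePoints ℝ) {j : ι} (hj : j ∉ S.act c) : 1 ≤ S.L j c := by
  have h0 := S.L_pos hc.1 hj
  obtain ⟨z, hz⟩ := iprod_lattice (S.a j) c (S.lat c hc)
  have : S.L j c = ((z - S.b j : ℤ) : ℝ) := by simp [L, hz]
  rw [this] at h0 ⊢
  exact_mod_cast h0

lemma PS_anti {s t : Finset ι} (h : s ⊆ t) : S.PS t ⊆ S.PS s :=
  fun _ hx => ⟨hx.1, fun i hi => hx.2 i (h hi)⟩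

lemma pyr_sub (hc : c ∈ S.PS s) (j : ι) : S.pyr s c j ⊆ S.PS s := by
  rintro _ ⟨z, hz, t, ht, rfl⟩
  exact (S.PS_convex s).add_smul_sub_mem hc (S.PS_anti (Finset.subset_insert j s) hz) ht

lemma pyr_compact (j : ι) : IsCompact (S.pyr s c j) := by
  have : S.pyr s c j = (fun q : (Fin n → ℝ) × ℝ => c + q.2 • (q.1 - c)) ''
      (S.PS (insert j s) ×ˢ Set.Icc (0:ℝ) 1) := by
    ext x
    constructor
    · rintro ⟨z, hz, t, ht, rfl⟩
      exact ⟨(z, t), ⟨hz, ht⟩, rfl⟩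
    · rintro ⟨⟨z, t⟩, ⟨hz, ht⟩, rfl⟩
      exact ⟨z, hz, t, ht, rfl⟩
  rw [this]
  exact ((S.PS_compact _).prod isCompact_Icc).image (by fun_prop)

lemma cover_ne (hc : c ∈ S.PS s) {x : Fin n → ℝ} (hx : x ∈ S.PS s) (hxc : x ≠ c) :
    ∃ j ∉ S.act c, x ∈ S.pyr s c j := by
  have hactx : ∀ i ∈ S.act c, ∀ t : ℝ, S.L i (c + t • (x - c)) = t * S.L i x := by
    intro i hi t
    rw [S.L_seg, S.mem_act.1 hi]; ring
  -- some facet is approached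
  have hex : ∃ j ∈ (S.act c)ᶜ, S.L j x < S.L j c := by
    by_contra hcon
    push Not at hcon
    have hray : ∀ t : ℝ, 0 ≤ t → c + t • (x - c) ∈ P := by
      intro t ht
      refine S.memL.2 fun i => ?_
      by_cases hi : i ∈ S.act c
      · rw [hactx i hi]; exact mul_nonneg ht (S.memL.1 hx.1 i)
      · rw [S.L_seg]
        have h1 := hcon i (Finset.mem_compl.2 hi)
        have h2 := S.memL.1 hc.1 i
        have := mul_nonneg ht (sub_nonneg.2 h1)
        linarith
    obtain ⟨C, hC⟩ := S.cpt.isBounded.exists_norm_le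
    have hpos : 0 < ‖x - c‖ := norm_pos_iff.2 (sub_ne_zero.2 hxc)
    have hCn : 0 ≤ C := (norm_nonneg _).trans (hC c hc.1)
    have h1 := hC _ (hray ((2 * C + 1) / ‖x - c‖) (by positivity))
    have h2 := hC c hc.1
    have h3 : ‖((2 * C + 1) / ‖x - c‖) • (x - c)‖ = 2 * C + 1 := by
      rw [norm_smul, Real.norm_eq_abs, abs_of_nonneg (by positivity)]
      field_simp
    have h4 : ‖((2 * C + 1) / ‖x - c‖) • (x - c)‖ ≤
        ‖c + ((2 * C + 1) / ‖x - c‖) • (x - c)‖ + ‖c‖ := by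
      have := norm_sub_le (c + ((2 * C + 1) / ‖x - c‖) • (x - c)) c
      rwa [add_sub_cancel_left] at this
    linarith
  obtain ⟨j0, hj0, hlt0⟩ := hex
  obtain ⟨j, hj, hmin⟩ := Finset.exists_min_image (S.act c)ᶜ (fun i => S.L i x / S.L i c) ⟨j0, hj0⟩
  have hjc : j ∉ S.act c := Finset.mem_compl.1 hj
  have hpj := S.L_pos hc.1 hjc
  set ρ := S.L j x / S.L j c with hρ
  have hρ0 : 0 ≤ ρ := div_nonneg (S.memL.1 hx.1 j) hpj.le
  have hρ1 : ρ < 1 := by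
    refine lt_of_le_of_lt (hmin j0 hj0) ?_
    rw [div_lt_one (S.L_pos hc.1 (Finset.mem_compl.1 hj0))]; exact hlt0
  have hq : 0 < 1 - ρ := by linarith
  have hLj : S.L j x = ρ * S.L j c := by rw [hρ]; field_simp
  refine ⟨j, hjc, c + (1 - ρ)⁻¹ • (x - c), ⟨S.memL.2 fun i => ?_, ?_⟩, 1 - ρ, ⟨hq.le, by linarith⟩, ?_⟩
  · by_cases hi : i ∈ S.act c
    · rw [hactx i hi]; exact mul_nonneg (inv_nonneg.2 hq.le) (S.memL.1 hx.1 i)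
    · have h1 := hmin i (Finset.mem_compl.2 hi)
      have hpi := S.L_pos hc.1 hi
      rw [le_div_iff₀ hpi] at h1
      rw [S.L_seg]
      have : S.L i c + (1 - ρ)⁻¹ * (S.L i x - S.L i c) = (1 - ρ)⁻¹ * (S.L i x - ρ * S.L i c) := by
        field_simp; ring
      rw [this]
      exact mul_nonneg (inv_nonneg.2 hq.le) (by linarith)
  · intro i hi
    rw [S.L_seg]
    rcases Finset.mem_insert.1 hi with rfl | hi
    · rw [hLj]; field_simp; ring
    · rw [hc.2 i hi, hx.2 i hi]; ring
  · rw [add_sub_cancel_left, smul_smul, mul_inv_cancel₀ hq.ne', one_smul, add_sub_cancel]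

lemma W_ne {v : Fin n → ℝ} (hv : v ∈ P.extremePoints ℝ) {i : ι} (hi : i ∈ S.act v) :
    cz (S.W v i) ≠ 0 := by
  intro h
  have h1 := S.dual' hv hi hi
  rw [h, ← lf_apply, map_zero] at h1
  simp at h1

lemma exists_other (hc : c ∈ P.extremePoints ℝ) (hs : s ⊆ S.act c) (hn : s.card < n) :
    ∃ x ∈ S.PS s, x ≠ c := by
  have : ∃ i ∈ S.act c, i ∉ s := by
    by_contra h
    push Not at h
    have h1 := Finset.card_le_card (show S.act c ⊆ s from h)
    have h2 : (S.act c).card = n := S.card c hc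
    omega
  obtain ⟨i, hi, his⟩ := this
  obtain ⟨ε, hε, h⟩ := S.exists_eps hc
  refine ⟨_, S.step_mem hc hs hi his (h i hi), ?_⟩
  intro h
  rw [add_eq_left, smul_eq_zero] at h
  rcases h with h | h
  · exact hε.ne' h
  · exact S.W_ne hc hi h

lemma cover (hc : c ∈ P.extremePoints ℝ) (hs : s ⊆ S.act c) (hn : s.card < n) :
    S.PS s = ⋃ j ∈ (S.act c)ᶜ, S.pyr s c j := by
  have hcs := S.mem_PS_of_sub hc.1 hs
  apply Set.Subset.antisymm
  · intro x hx
    simp only [Set.mem_iUnion, Finset.mem_compl, exists_prop]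
    by_cases hxc : x = c
    · obtain ⟨x', hx', hne⟩ := S.exists_other hc hs hn
      obtain ⟨j, hj, z, hz, t, ht, _⟩ := S.cover_ne hcs hx' hne
      exact ⟨j, hj, z, hz, 0, by simp, by simp [hxc]⟩
    · exact S.cover_ne hcs hx hxc
  · exact Set.iUnion₂_subset fun j _ => S.pyr_sub hcs j

lemma ch_injOn {v : Fin n → ℝ} {e : Fin d → ι} (hv : v ∈ P.extremePoints ℝ) (hs : s ⊆ S.act v)
    (he : S.IsChart v s d e) : Set.InjOn (S.ch e) (S.HS s) := by
  intro x hx y hy h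
  rw [← S.sg_ch hv hs he hx, h, S.sg_ch hv hs he hy]

lemma overlap (hc : c ∈ P) {j k : ι} (hj : j ∉ S.act c) (hk : k ∉ S.act c)
    {x : Fin n → ℝ} (hxj : x ∈ S.pyr s c j) (hxk : x ∈ S.pyr s c k) :
    S.L j x * S.L k c = S.L k x * S.L j c ∧
      (x ≠ c → (S.PS (insert k (insert j s))).Nonempty) := by
  obtain ⟨z, hz, t, ht, hx⟩ := hxj
  obtain ⟨z', hz', t', ht', hx'⟩ := hxk
  have hpj := S.L_pos hc hj
  have hpk := S.L_pos hc hk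
  have e1 : S.L j x = (1 - t) * S.L j c := by
    rw [hx, S.L_seg, hz.2 j (Finset.mem_insert_self _ _)]; ring
  have e2 : S.L k x = (1 - t') * S.L k c := by
    rw [hx', S.L_seg, hz'.2 k (Finset.mem_insert_self _ _)]; ring
  have e3 : S.L k x = (1 - t) * S.L k c + t * S.L k z := by
    rw [hx, S.L_seg]; ring
  have e4 : S.L j x = (1 - t') * S.L j c + t' * S.L j z' := by
    rw [hx', S.L_seg]; ring
  have n3 : 0 ≤ t * S.L k z := mul_nonneg ht.1 (S.memL.1 hz.1 k)
  have n4 : 0 ≤ t' * S.L j z' := mul_nonneg ht'.1 (S.memL.1 hz'.1 j)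
  have t1 : t' ≤ t := by
    have : (t' - t) * S.L k c ≤ 0 := by linarith
    nlinarith
  have t2 : t ≤ t' := by
    have : (t - t') * S.L j c ≤ 0 := by linarith
    nlinarith
  have tt : t = t' := le_antisymm t2 t1
  subst tt
  refine ⟨by rw [e1, e2]; ring, fun hne => ⟨z, hz.1, ?_⟩⟩
  intro i hi
  rcases Finset.mem_insert.1 hi with rfl | hi
  · have : t * S.L i z = 0 := by linarith
    rcases mul_eq_zero.1 this with h | h
    · exact absurd (by rw [hx, h]; simp) hne
    · exact h
  · exact hz.2 i hi

lemma ch_seg {e : Fin d → ι} (x y : Fin n → ℝ) (t : ℝ) :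
    S.ch e (x + t • (y - x)) = S.ch e x + t • (S.ch e y - S.ch e x) := by
  ext k; simp [ch, S.L_seg]

lemma chart_ex {v : Fin n → ℝ} (hv : v ∈ P.extremePoints ℝ) (hs : s ⊆ S.act v)
    (hd : s.card + d = n) : ∃ e : Fin d → ι, S.IsChart v s d e := by
  refine S.exists_chart v s d ?_
  have h2 : (S.act v).card = n := S.card v hv
  rw [Finset.card_sdiff_of_subset hs]; omega

lemma chart_cons {v : Fin n → ℝ} {j : ι} (hjv : j ∈ S.act v) (hjs : j ∉ s) {e : Fin d → ι}
    (he : S.IsChart v (insert j s) d e) :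
    S.IsChart v s (d + 1) (Fin.cons j e : Fin (d + 1) → ι) := by
  refine ⟨?_, ?_⟩
  · rw [Fin.cons_injective_iff]
    refine ⟨?_, he.inj⟩
    rintro ⟨k, hk⟩
    exact ((he.range j).1 ⟨k, hk⟩).2 (Finset.mem_insert_self _ _)
  · intro i
    rw [Fin.exists_fin_succ]
    simp only [Fin.cons_zero, Fin.cons_succ, he.range, Finset.mem_insert, not_or]
    constructor
    · rintro (rfl | ⟨h1, _, h2⟩)
      · exact ⟨hjv, hjs⟩
      · exact ⟨h1, h2⟩
    · rintro ⟨h1, h2⟩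
      by_cases h : j = i
      · exact Or.inl h
      · exact Or.inr ⟨h1, fun h' => h h'.symm, h2⟩

lemma null_overlap {μ : Set (Fin n → ℝ) → ENNReal}
    (hμ : ∀ v ∈ P.extremePoints ℝ, s ⊆ S.act v → ∀ e : Fin (d+1) → ι, S.IsChart v s (d+1) e →
        ∀ A ⊆ S.HS s, volume (S.ch e '' A) = μ A)
    (hd : s.card + (d + 1) = n)
    (hc : c ∈ P.extremePoints ℝ) (hs : s ⊆ S.act c) {j k : ι} (hjk : j ≠ k)
    (hj : j ∉ S.act c) (hk : k ∉ S.act c) : μ (S.pyr s c j ∩ S.pyr s c k) = 0 := by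
  have hcs := S.mem_PS_of_sub hc.1 hs
  have hsub : S.pyr s c j ∩ S.pyr s c k ⊆ S.HS s :=
    (Set.inter_subset_left.trans (S.pyr_sub hcs j)).trans (S.PS_sub_HS s)
  by_cases hne : (S.PS (insert k (insert j s))).Nonempty
  · obtain ⟨v, hv, hvs⟩ := S.exists_vert _ hne
    have hact := S.sub_act hvs
    have hs' : s ⊆ S.act v := fun i hi => hact (by simp [hi])
    obtain ⟨e, he⟩ := S.chart_ex hv hs' hd
    rw [← hμ v hv hs' e he _ hsub]
    obtain ⟨a, ha⟩ := (he.range j).2 ⟨hact (by simp), fun h => hj (hs h)⟩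
    obtain ⟨b, hb⟩ := (he.range k).2 ⟨hact (by simp), fun h => hk (hs h)⟩
    have hab : a ≠ b := by rintro rfl; exact hjk (ha.symm.trans hb)
    let φ : (Fin (d+1) → ℝ) →ₗ[ℝ] ℝ :=
      S.L k c • LinearMap.proj a - S.L j c • LinearMap.proj b
    have hφ : LinearMap.ker φ ≠ ⊤ := by
      intro h
      have h1 : Pi.single a 1 ∈ LinearMap.ker φ := by rw [h]; trivial
      rw [LinearMap.mem_ker] at h1
      simp [φ, hab, hab.symm] at h1
      exact (S.L_pos hc.1 hk).ne' h1
    refine measure_mono_null ?_ (Measure.addHaar_submodule volume (LinearMap.ker φ) hφ)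
    rintro _ ⟨x, hx, rfl⟩
    rw [SetLike.mem_coe, LinearMap.mem_ker]
    have := (S.overlap hc.1 hj hk hx.1 hx.2).1
    simp only [φ, LinearMap.sub_apply, LinearMap.smul_apply, LinearMap.proj_apply, smul_eq_mul, ch,
      ha, hb]
    linarith
  · have hsub1 : S.pyr s c j ∩ S.pyr s c k ⊆ {c} := by
      intro x hx
      by_contra hxc
      exact hne ((S.overlap hc.1 hj hk hx.1 hx.2).2 hxc)
    obtain ⟨e, he⟩ := S.chart_ex hc hs hd
    rw [← hμ c hc hs e he _ hsub]
    refine measure_mono_null (Set.image_mono hsub1) ?_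
    rw [Set.image_singleton]
    exact measure_singleton _

/-- the volume used for faces -/
def gv (volf : Set (Fin n → ℝ) → ℝ) (s : Finset ι) : ℝ :=
  open Classical in if (S.PS s).Nonempty then volf (S.PS s) else 0

lemma pyr_measure {volf : Set (Fin n → ℝ) → ℝ}
    (hvol : ∀ t, (S.PS t).Nonempty → HasRelVol (S.PS t) (volf (S.PS t)))
    {μ : Set (Fin n → ℝ) → ENNReal}
    (hμ : ∀ v ∈ P.extremePoints ℝ, s ⊆ S.act v → ∀ e : Fin (d+1) → ι, S.IsChart v s (d+1) e →
        ∀ A ⊆ S.HS s, volume (S.ch e '' A) = μ A)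
    (hd : s.card + (d + 1) = n)
    (hc : c ∈ P.extremePoints ℝ) (hs : s ⊆ S.act c) {j : ι} (hj : j ∉ S.act c) :
    μ (S.pyr s c j) ≠ ⊤ ∧
    (μ (S.pyr s c j)).toReal = S.L j c / (d + 1) * S.gv volf (insert j s) := by
  have hcs := S.mem_PS_of_sub hc.1 hs
  have hsub : S.pyr s c j ⊆ S.HS s := (S.pyr_sub hcs j).trans (S.PS_sub_HS s)
  by_cases hne : (S.PS (insert j s)).Nonempty
  · obtain ⟨v, hv, hvs⟩ := S.exists_vert _ hne
    have hact := S.sub_act hvs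
    have hs' : s ⊆ S.act v := fun i hi => hact (by simp [hi])
    have hjs : j ∉ s := fun h => hj (hs h)
    have hcard : (insert j s).card + d = n := by
      rw [Finset.card_insert_of_notMem hjs]; omega
    obtain ⟨e, he⟩ := S.chart_ex hv hact hcard
    have hcons := S.chart_cons (hact (by simp)) hjs he
    obtain ⟨ν, hν1, hν2⟩ := S.relVol_chart hv hact (d := d) (by omega) (hvol _ hne)
    have hB := hν2 v hv hact e he _ (S.PS_sub_HS _)
    have himg : S.ch (Fin.cons j e : Fin (d+1) → ι) '' S.pyr s c j =
        {x : Fin (d+1) → ℝ | ∃ z ∈ S.ch e '' S.PS (insert j s), ∃ t ∈ Set.Icc (0:ℝ) 1,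
          x = S.ch (Fin.cons j e : Fin (d+1) → ι) c +
            t • ((Fin.cons 0 z : Fin (d+1) → ℝ) - S.ch (Fin.cons j e : Fin (d+1) → ι) c)} := by
      have hz0 : ∀ z ∈ S.PS (insert j s), S.ch (Fin.cons j e : Fin (d+1) → ι) z =
          (Fin.cons 0 (S.ch e z) : Fin (d+1) → ℝ) := by
        intro z hz
        ext k
        refine Fin.cases ?_ (fun k => ?_) k
        · simpa [ch] using hz.2 j (Finset.mem_insert_self _ _)
        · simp [ch]
      ext x
      constructor
      · rintro ⟨_, ⟨z, hz, t, ht, rfl⟩, rfl⟩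
        exact ⟨_, ⟨z, hz, rfl⟩, t, ht, by rw [S.ch_seg, hz0 z hz]⟩
      · rintro ⟨_, ⟨z, hz, rfl⟩, t, ht, rfl⟩
        exact ⟨_, ⟨z, hz, t, ht, rfl⟩, by rw [S.ch_seg, hz0 z hz]⟩
    have hp0 : S.ch (Fin.cons j e : Fin (d+1) → ι) c 0 = S.L j c := by simp [ch]
    have hmain := hμ v hv hs' _ hcons _ hsub
    have hcomp := (S.PS_compact (insert j s)).image (S.ch_cont e)
    rw [himg, pyr_vol d _ hcomp _
      (by rw [hp0]; exact S.L_pos hc.1 hj), hp0, hB] at hmain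
    have hfin : ν (S.PS (insert j s)) ≠ ⊤ := by
      rw [← hB]; exact hcomp.measure_ne_top
    rw [← hmain]
    refine ⟨ENNReal.mul_ne_top ENNReal.ofReal_ne_top hfin, ?_⟩
    rw [ENNReal.toReal_mul, ENNReal.toReal_ofReal
      (div_nonneg (S.L_pos hc.1 hj).le (by positivity)), gv, if_pos hne, hν1]
  · have hemp : S.pyr s c j = ∅ := by
      rw [Set.eq_empty_iff_forall_notMem]
      rintro _ ⟨z, hz, _⟩
      exact hne ⟨z, hz⟩
    obtain ⟨e, he⟩ := S.chart_ex hc hs hd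
    rw [← hμ c hc hs e he _ hsub, hemp, gv, if_neg hne]
    simp

lemma pyr_rec {volf : Set (Fin n → ℝ) → ℝ}
    (hvol : ∀ t, (S.PS t).Nonempty → HasRelVol (S.PS t) (volf (S.PS t)))
    (hd : s.card + (d + 1) = n)
    (hc : c ∈ P.extremePoints ℝ) (hs : s ⊆ S.act c) :
    (d + 1) * S.gv volf s = ∑ j ∈ (S.act c)ᶜ, S.L j c * S.gv volf (insert j s) := by
  have hcs := S.mem_PS_of_sub hc.1 hs
  obtain ⟨μ, hμ1, hμ⟩ := S.relVol_chart hc hs (d := d + 1) (by omega) (hvol s ⟨c, hcs⟩)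
  obtain ⟨e, he⟩ := S.chart_ex hc hs hd
  have hsub : ∀ j, S.pyr s c j ⊆ S.HS s := fun j => (S.pyr_sub hcs j).trans (S.PS_sub_HS s)
  have hsum : μ (S.PS s) = ∑ j ∈ (S.act c)ᶜ, μ (S.pyr s c j) := by
    rw [← hμ c hc hs e he _ (S.PS_sub_HS s), S.cover hc hs (by omega), Set.image_iUnion₂,
      measure_biUnion_finset₀]
    · exact Finset.sum_congr rfl fun j _ => hμ c hc hs e he _ (hsub j)
    · intro j hj k hk hjk
      simp only [Function.onFun, AEDisjoint]
      rw [← (S.ch_injOn hc hs he).image_inter (hsub j) (hsub k),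
        hμ c hc hs e he _ (Set.inter_subset_left.trans (hsub j))]
      exact S.null_overlap hμ hd hc hs hjk (by simpa using hj) (by simpa using hk)
    · intro j _
      exact ((S.pyr_compact j).image (S.ch_cont e)).measurableSet.nullMeasurableSet
  have hpm := fun j (hj : j ∈ (S.act c)ᶜ) =>
    S.pyr_measure hvol hμ hd hc hs (Finset.mem_compl.1 hj)
  rw [gv, if_pos ⟨c, hcs⟩, hμ1, hsum, ENNReal.toReal_sum fun j hj => (hpm j hj).1, Finset.mul_sum]
  refine Finset.sum_congr rfl fun j hj => ?_
  rw [(hpm j hj).2]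
  field_simp

lemma gv_nonneg {volf : Set (Fin n → ℝ) → ℝ}
    (hvol : ∀ t, (S.PS t).Nonempty → HasRelVol (S.PS t) (volf (S.PS t))) (s : Finset ι) :
    0 ≤ S.gv volf s := by
  unfold gv
  split_ifs with h
  · obtain ⟨T, _, _, h3⟩ := hvol s h
    rw [h3]; exact ENNReal.toReal_nonneg
  · exact le_rfl

lemma exists_other_vert (hc : c ∈ P.extremePoints ℝ) (hs : s ⊆ S.act c) (hn : s.card < n) :
    ∃ v ∈ P.extremePoints ℝ, v ∈ S.PS s ∧ v ≠ c := by
  by_contra hcon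
  push Not at hcon
  have h1 : (S.PS s).extremePoints ℝ ⊆ {c} := fun v hv =>
    hcon v ((S.PS_extreme s).extremePoints_subset_extremePoints hv) hv.1
  have h2 := closure_convexHull_extremePoints (S.PS_compact s) (S.PS_convex s)
  obtain ⟨x, hx, hne⟩ := S.exists_other hc hs hn
  rw [← h2] at hx
  have h3 := closure_mono (convexHull_mono (𝕜 := ℝ) h1) hx
  rw [convexHull_singleton, closure_singleton] at h3
  exact hne h3

lemma comb {volf : Set (Fin n → ℝ) → ℝ}
    (hvol : ∀ t, (S.PS t).Nonempty → HasRelVol (S.PS t) (volf (S.PS t))) :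
    CombData n (fun s => (Nat.factorial (n - s.card) : ℝ) * S.gv volf s)
      (fun s => (S.PS s).Nonempty) (V := ↥(P.extremePoints ℝ)) (fun v => S.act v)
      (fun v j => S.L j v) where
  card := fun v => S.card v v.2
  g0 := fun s => mul_nonneg (by positivity) (S.gv_nonneg hvol s)
  hy := fun v j hj => S.L_ge_one v.2 hj
  rec' := by
    intro v s hs hn
    obtain ⟨d, hd⟩ : ∃ d, s.card + (d + 1) = n := ⟨n - s.card - 1, by omega⟩
    have h := S.pyr_rec hvol hd v.2 hs
    have e1 : n - s.card = d + 1 := by omega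
    rw [e1, Nat.factorial_succ]
    push_cast
    rw [mul_comm ((d:ℝ) + 1), mul_assoc, h, Finset.mul_sum]
    refine Finset.sum_congr rfl fun j hj => ?_
    have hjs : j ∉ s := fun h => Finset.mem_compl.1 hj (hs h)
    have e2 : n - (insert j s).card = d := by rw [Finset.card_insert_of_notMem hjs]; omega
    rw [e2]; ring
  down := fun s t hts h => h.mono (S.PS_anti hts)
  nf := fun s h => by simp [gv, if_neg h]
  fcard := by
    intro s h
    obtain ⟨v, hv, hvs⟩ := S.exists_vert s h
    exact (Finset.card_le_card (S.sub_act hvs)).trans (S.card v hv).le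
  ex := by
    intro s M h hn hM
    obtain ⟨c, hc, hcs⟩ := S.exists_vert s h
    have hs := S.sub_act hcs
    obtain ⟨c', hc', hcs', hne⟩ := S.exists_other_vert hc hs hn
    by_contra hcon
    push Not at hcon
    have key : ∀ v ∈ P.extremePoints ℝ, s ⊆ S.act v → S.act v = s ∪ M := by
      intro v hv hsv
      have h1 := hcon ⟨v, hv⟩ hsv
      dsimp only at h1
      have h2 : (S.act v).card = n := S.card v hv
      have h3 : s ∪ (M ∩ S.act v) ⊆ S.act v :=
        Finset.union_subset hsv Finset.inter_subset_right
      have h4 : s ∪ (M ∩ S.act v) ⊆ s ∪ M :=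
        Finset.union_subset_union_right Finset.inter_subset_left
      have h5 := Finset.card_union_le s M
      rw [← Finset.eq_of_subset_of_card_le h3 (by omega)]
      exact Finset.eq_of_subset_of_card_le h4 (by omega)
    apply hne
    apply S.act_inj hc
    rw [key c hc hs, key c' hc' (S.sub_act hcs')]
  ex1 := by
    intro s h
    obtain ⟨c, hc, hcs⟩ := S.exists_vert s h
    exact ⟨⟨c, hc⟩, S.sub_act hcs⟩

end Sys

namespace Sys
variable {n : ℕ} {ι : Type} [Fintype ι] [DecidableEq ι] {P : Set (Fin n → ℝ)} (S : Sys n ι P)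

lemma face_of_isFace {F : Set (Fin n → ℝ)} (h : IsFace P F) : ∃ s, F = S.PS s := by
  obtain ⟨hne, u, c, hu, hF⟩ := h
  have hucont : Continuous u := u.continuous_of_finiteDimensional
  have hFc : IsCompact F := by
    have : F = P ∩ {x | u x = c} := hF
    rw [this]
    exact S.cpt.inter_right (isClosed_eq hucont continuous_const)
  have hext : IsExtreme ℝ P F := by
    rw [hF]
    refine ⟨fun x hx => hx.1, ?_⟩
    intro x hx y hy z hz hzo
    obtain ⟨p, q, hp, hq, hpq, rfl⟩ := hzo
    refine ⟨hx, ?_⟩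
    have h1 := hz.2
    simp only [map_add, map_smul, smul_eq_mul] at h1
    have h2 := hu x hx
    have h3 := hu y hy
    refine le_antisymm ?_ h2
    by_contra hlt
    push Not at hlt
    have h4 := mul_lt_mul_of_pos_left hlt hp
    have h5 := mul_le_mul_of_nonneg_left h3 hq.le
    have : p * c + q * c = c := by rw [← add_mul, hpq, one_mul]
    linarith
  obtain ⟨v, hvF⟩ := hFc.extremePoints_nonempty hne
  have hv := hext.extremePoints_subset_extremePoints hvF
  have huv : u v = c := by
    have := hvF.1
    rw [hF] at this; exact this.2
  have hW : ∀ i ∈ S.act v, 0 ≤ u (cz (S.W v i)) := by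
    intro i hi
    obtain ⟨ε, hε, h⟩ := S.exists_eps hv
    have := hu _ (h i hi)
    rw [map_add, map_smul, huv, smul_eq_mul] at this
    exact nonneg_of_mul_nonneg_right (by linarith) hε
  have hexp : ∀ x, u x = c + ∑ i ∈ S.act v, S.L i x * u (cz (S.W v i)) := by
    intro x
    conv_lhs => rw [S.expand' hv x]
    simp [huv]
  refine ⟨(S.act v).filter fun i => u (cz (S.W v i)) ≠ 0, ?_⟩
  rw [hF]
  ext x
  refine and_congr_right fun hx => ?_
  rw [hexp, add_eq_left, Finset.sum_eq_zero_iff_of_nonneg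
    fun i hi => mul_nonneg (S.memL.1 hx i) (hW i hi)]
  constructor
  · intro h i hi
    rw [Finset.mem_filter] at hi
    exact (mul_eq_zero.1 (h i hi.1)).resolve_right hi.2
  · intro h i hi
    by_cases h0 : u (cz (S.W v i)) = 0
    · rw [h0, mul_zero]
    · rw [h i (Finset.mem_filter.2 ⟨hi, h0⟩), zero_mul]

lemma isFace_PS {s : Finset ι} (h : (S.PS s).Nonempty) : IsFace P (S.PS s) := by
  have key : ∀ x, (∑ i ∈ s, lf (S.a i)) x = ∑ i ∈ s, (S.b i : ℝ) + ∑ i ∈ s, S.L i x := by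
    intro x
    rw [LinearMap.sum_apply, ← Finset.sum_add_distrib]
    exact Finset.sum_congr rfl fun i _ => by simp [L]
  refine ⟨h, ∑ i ∈ s, lf (S.a i), ∑ i ∈ s, (S.b i : ℝ), ?_, ?_⟩
  · intro x hx
    rw [key]
    have := Finset.sum_nonneg fun i (_ : i ∈ s) => S.memL.1 hx i
    linarith
  · ext x
    refine and_congr_right fun hx => ?_
    rw [key, add_eq_left, Finset.sum_eq_zero_iff_of_nonneg fun i _ => S.memL.1 hx i]

lemma PS_sub_imp {s t : Finset ι} (hne : (S.PS s).Nonempty) (h : S.PS s ⊆ S.PS t) : t ⊆ s := by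
  obtain ⟨v, hv, hvs⟩ := S.exists_vert s hne
  have ht := S.sub_act (h hvs)
  intro i hi
  by_contra his
  obtain ⟨ε, hε, he⟩ := S.exists_eps hv
  have h1 := h (S.step_mem hv (S.sub_act hvs) (ht hi) his (he i (ht hi)))
  have h2 := h1.2 i hi
  rw [S.L_line, S.mem_act.1 (ht hi), S.dual' hv (ht hi) (ht hi), if_pos rfl] at h2
  linarith

lemma final {n : ℕ} {ι : Type} [Fintype ι] [DecidableEq ι] {P : Set (Fin n → ℝ)} (S : Sys n ι P)
    (𝓕 : Finset (Set (Fin n → ℝ))) (h𝓕 : ∀ F, F ∈ 𝓕 ↔ IsFace P F)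
    (volf : Set (Fin n → ℝ) → ℝ) (hv : ∀ F ∈ 𝓕, HasRelVol F (volf F)) : 0 ≤ faceSum 𝓕 volf := by
  classical
  have hvol : ∀ t, (S.PS t).Nonempty → HasRelVol (S.PS t) (volf (S.PS t)) :=
    fun t ht => hv _ ((h𝓕 _).2 (S.isFace_PS ht))
  have hmain := (S.comb hvol).main
  have h𝓕' : 𝓕 = (Finset.univ.filter fun s => (S.PS s).Nonempty).image S.PS := by
    ext F
    rw [h𝓕, Finset.mem_image]
    constructor
    · intro h
      obtain ⟨s, hs⟩ := S.face_of_isFace h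
      exact ⟨s, by simpa [← hs] using h.1, hs.symm⟩
    · rintro ⟨s, hs, rfl⟩
      exact S.isFace_PS (by simpa using hs)
  have hinj : Set.InjOn S.PS
      (↑(Finset.univ.filter fun s => (S.PS s).Nonempty) : Set (Finset ι)) := by
    intro s hs t ht hst
    simp only [Finset.coe_filter, Finset.mem_univ, true_and, Set.mem_setOf_eq] at hs ht
    exact Finset.Subset.antisymm (S.PS_sub_imp ht hst.symm.subset) (S.PS_sub_imp hs hst.subset)
  have heq : faceSum 𝓕 volf = ∑ s : Finset ι, (-1:ℝ)^s.card * (((n:ℝ)+1-s.card) *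
      ((Nat.factorial (n - s.card) : ℝ) * S.gv volf s)) := by
    unfold faceSum
    rw [h𝓕', Finset.sum_image hinj, Finset.sum_filter]
    refine Finset.sum_congr rfl fun s _ => ?_
    by_cases h : (S.PS s).Nonempty
    · obtain ⟨v, hv, hvs⟩ := S.exists_vert s h
      have hs := S.sub_act hvs
      have hc : s.card ≤ n := (Finset.card_le_card hs).trans (S.card v hv).le
      rw [if_pos h, S.fdim_PS hv hs, gv, if_pos h, Nat.factorial_succ, Nat.sub_sub_self hc]
      push_cast [Nat.cast_sub hc]
      ring
    · rw [if_neg h, gv, if_neg h]; simp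
  rw [heq]
  exact hmain

end Sys

/-! ### Construction of the system of inequalities -/

/-- vertex data -/
structure VD {n : ℕ} (P : Set (Fin n → ℝ)) (v : Fin n → ℝ) (w a : Fin n → Fin n → ℤ)
    (b : Fin n → ℤ) (c : Fin n → ℝ) : Prop where
  cpos : ∀ i, 0 < c i
  dual : ∀ i j, iprod (a i) (cz (w j)) = if i = j then 1 else 0
  expand : ∀ x, x = ∑ i, iprod (a i) x • cz (w i)
  mem : ∀ i, v + c i • cz (w i) ∈ P
  nonneg : ∀ x ∈ P, ∀ i, 0 ≤ iprod (a i) (x - v)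
  bv : ∀ i, iprod (a i) v = b i

lemma iprod_sub {n : ℕ} (a : Fin n → ℤ) (x y : Fin n → ℝ) :
    iprod a (x - y) = iprod a x - iprod a y := (lf a).map_sub x y

lemma face_extreme {n : ℕ} {P : Set (Fin n → ℝ)} (u : (Fin n → ℝ) →ₗ[ℝ] ℝ) (c : ℝ)
    (hu : ∀ x ∈ P, c ≤ u x) : IsExtreme ℝ P {x ∈ P | u x = c} := by
  refine ⟨fun x hx => hx.1, ?_⟩
  intro x hx y hy z hz hzo
  obtain ⟨p, q, hp, hq, hpq, rfl⟩ := hzo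
  refine ⟨hx, ?_⟩
  have h1 := hz.2
  simp only [map_add, map_smul, smul_eq_mul] at h1
  have h2 := hu x hx
  have h3 := hu y hy
  refine le_antisymm ?_ h2
  by_contra hlt
  push Not at hlt
  have h4 := mul_lt_mul_of_pos_left hlt hp
  have h5 := mul_le_mul_of_nonneg_left h3 hq.le
  have : p * c + q * c = c := by rw [← add_mul, hpq, one_mul]
  linarith

/-- an extreme point of a convex hull is not in the hull of the other points -/
lemma extreme_notMem {n : ℕ} {X : Set (Fin n → ℝ)} {e : Fin n → ℝ}
    (he : e ∈ (convexHull ℝ X).extremePoints ℝ) : e ∉ convexHull ℝ (X \ {e}) := by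
  have h := ((convex_convexHull ℝ X).mem_extremePoints_iff_convex_diff.1 he).2
  have hsub : X \ {e} ⊆ convexHull ℝ X \ {e} :=
    Set.diff_subset_diff_left (subset_convexHull ℝ X)
  intro hmem
  exact (convexHull_min hsub h hmem).2 rfl

/-- separation for finite sets -/
lemma sep_finite {n : ℕ} {X : Set (Fin n → ℝ)} (hX : X.Finite) {e : Fin n → ℝ}
    (he : e ∉ convexHull ℝ X) : ∃ g : (Fin n → ℝ) →ₗ[ℝ] ℝ, ∀ x ∈ X, g e < g x := by
  obtain ⟨f, s, h1, h2⟩ := geometric_hahn_banach_point_closed (convex_convexHull ℝ X)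
    (hX.isCompact_convexHull ℝ).isClosed he
  exact ⟨f.toLinearMap, fun x hx => h1.trans (h2 x (subset_convexHull ℝ X hx))⟩

/-- the tangent cone at a vertex is spanned by edges -/
lemma cone_edges {n : ℕ} (V : Finset (Fin n → ℝ)) {v : Fin n → ℝ}
    (hv : v ∈ (convexHull ℝ (↑V : Set (Fin n → ℝ))).extremePoints ℝ)
    (φ : (Fin n → ℝ) →ₗ[ℝ] ℝ)
    (hedge : ∀ F, IsFace (convexHull ℝ (↑V : Set (Fin n → ℝ))) F → v ∈ F → fdim F = 1 →
      ∀ x ∈ F, 0 ≤ φ (x - v)) :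
    ∀ x ∈ convexHull ℝ (↑V : Set (Fin n → ℝ)), 0 ≤ φ (x - v) := by
  classical
  have hvV : v ∈ (↑V : Set (Fin n → ℝ)) := extremePoints_convexHull_subset hv
  obtain ⟨u, hu⟩ := sep_finite (V.finite_toSet.subset Set.diff_subset) (extreme_notMem hv)
  have hu' : ∀ x ∈ V, x ≠ v → 0 < u (x - v) := by
    intro x hx hxv
    rw [map_sub, sub_pos]; exact hu x ⟨hx, hxv⟩
  set N : (Fin n → ℝ) → (Fin n → ℝ) := fun x => (u (x - v))⁻¹ • (x - v) with hN
  set X : Set (Fin n → ℝ) := N '' ((↑V : Set (Fin n → ℝ)) \ {v}) with hXdef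
  have hXfin : X.Finite := (V.finite_toSet.subset Set.diff_subset).image _
  have hNx : ∀ x ∈ V, x ≠ v → x - v = u (x - v) • N x := by
    intro x hx hxv
    rw [hN]; simp only
    rw [smul_smul, mul_inv_cancel₀ (hu' x hx hxv).ne', one_smul]
  -- extreme points of the vertex figure
  have hext : ∀ e ∈ (convexHull ℝ X).extremePoints ℝ, 0 ≤ φ e := by
    intro e he
    have heX : e ∈ X := extremePoints_convexHull_subset he
    obtain ⟨g, hg⟩ := sep_finite (hXfin.subset Set.diff_subset) (extreme_notMem he)
    obtain ⟨x0, ⟨hx0V, hx0v⟩, hx0e⟩ := heX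
    have hx0v' : x0 ≠ v := hx0v
    have hu0 := hu' x0 hx0V hx0v'
    have hx0 : x0 - v = u (x0 - v) • e := by rw [← hx0e]; exact hNx x0 hx0V hx0v'
    have hue : u e = 1 := by
      have := congrArg u hx0
      rw [map_smul, smul_eq_mul] at this
      field_simp at this
      exact this.symm
    have he0 : e ≠ 0 := by rintro rfl; simp at hue
    let U : (Fin n → ℝ) →ₗ[ℝ] ℝ := g - g e • u
    have hUx : ∀ x ∈ V, U v ≤ U x ∧ (U x = U v → ∃ t : ℝ, x = v + t • e) := by
      intro x hx
      by_cases hxv : x = v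
      · exact ⟨by rw [hxv], fun _ => ⟨0, by simp [hxv]⟩⟩
      have hp := hu' x hx hxv
      have hdiff : U x - U v = u (x - v) * (g (N x) - g e) := by
        rw [← map_sub]
        conv_lhs => rw [hNx x hx hxv]
        have huN : u (N x) = 1 := by
          have := congrArg u (hNx x hx hxv)
          rw [map_smul, smul_eq_mul] at this
          field_simp at this
          exact this.symm
        simp [U, huN]
      by_cases hNe : N x = e
      · refine ⟨by rw [hNe] at hdiff; linarith, fun _ => ⟨u (x - v), ?_⟩⟩
        rw [← hNe, ← hNx x hx hxv]; simp
      · have hlt := hg (N x) ⟨⟨x, ⟨hx, hxv⟩, rfl⟩, hNe⟩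
        have : 0 < U x - U v := by rw [hdiff]; exact mul_pos hp (by linarith)
        exact ⟨by linarith, fun h => by linarith⟩
    have hconv : Convex ℝ {x | U v ≤ U x ∧ (U x = U v → ∃ t : ℝ, x = v + t • e)} := by
      rw [convex_iff_forall_pos]
      rintro x ⟨hx1, hx2⟩ y ⟨hy1, hy2⟩ p q hp hq hpq
      have e1 : U (p • x + q • y) = U v + (p * (U x - U v) + q * (U y - U v)) := by
        simp only [map_add, map_smul, smul_eq_mul]
        linear_combination (U v) * hpq
      have n1 := mul_nonneg hp.le (sub_nonneg.2 hx1)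
      have n2 := mul_nonneg hq.le (sub_nonneg.2 hy1)
      refine ⟨by rw [e1]; linarith, fun h => ?_⟩
      rw [e1] at h
      have z1 : p * (U x - U v) = 0 := by linarith
      have z2 : q * (U y - U v) = 0 := by linarith
      obtain ⟨t, ht⟩ := hx2 (by
        have := (mul_eq_zero.1 z1).resolve_left hp.ne'; linarith)
      obtain ⟨t', ht'⟩ := hy2 (by
        have := (mul_eq_zero.1 z2).resolve_left hq.ne'; linarith)
      refine ⟨p * t + q * t', ?_⟩
      rw [ht, ht']
      have hq' : q = 1 - p := by linarith
      rw [hq']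
      module
    have hall := convexHull_min (𝕜 := ℝ) (fun x (hx : x ∈ (↑V : Set (Fin n → ℝ))) => hUx x hx) hconv
    set F : Set (Fin n → ℝ) := {x ∈ convexHull ℝ (↑V : Set (Fin n → ℝ)) | U x = U v} with hF
    have hvF : v ∈ F := ⟨hv.1, rfl⟩
    have hx0F : x0 ∈ F := by
      refine ⟨subset_convexHull ℝ _ hx0V, ?_⟩
      have : U (x0 - v) = 0 := by rw [hx0]; simp [U, hue]
      rw [map_sub] at this; linarith
    have hface : IsFace (convexHull ℝ (↑V : Set (Fin n → ℝ))) F :=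
      ⟨⟨v, hvF⟩, U, U v, fun x hx => (hall hx).1, rfl⟩
    have hdim : fdim F = 1 := by
      have : vectorSpan ℝ F = Submodule.span ℝ {e} := by
        apply le_antisymm
        · rw [vectorSpan_def, Submodule.span_le]
          rintro _ ⟨x, hx, y, hy, rfl⟩
          obtain ⟨t, ht⟩ := (hall hx.1).2 hx.2
          obtain ⟨t', ht'⟩ := (hall hy.1).2 hy.2
          rw [SetLike.mem_coe, Submodule.mem_span_singleton]
          refine ⟨t - t', ?_⟩
          simp only [vsub_eq_sub]
          rw [ht, ht']; module
        · rw [Submodule.span_singleton_le_iff_mem]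
          have := vsub_mem_vectorSpan ℝ hx0F hvF
          rw [vsub_eq_sub, hx0] at this
          have := Submodule.smul_mem _ (u (x0 - v))⁻¹ this
          rwa [smul_smul, inv_mul_cancel₀ hu0.ne', one_smul] at this
      unfold fdim
      rw [this]
      exact finrank_span_singleton he0
    have h0 := hedge F hface hvF hdim x0 hx0F
    rw [← hx0e, hN]
    simp only [map_smul, smul_eq_mul]
    exact mul_nonneg (inv_nonneg.2 hu0.le) h0
  have hφc : Continuous φ := φ.continuous_of_finiteDimensional
  have hK : ∀ e ∈ convexHull ℝ X, 0 ≤ φ e := by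
    intro e he
    rw [← closure_convexHull_extremePoints (hXfin.isCompact_convexHull ℝ)
      (convex_convexHull ℝ X)] at he
    have hcl : IsClosed {x | 0 ≤ φ x} := isClosed_le continuous_const hφc
    have hcv : Convex ℝ {x | 0 ≤ φ x} := convex_halfSpace_ge φ.isLinear 0
    exact closure_minimal (convexHull_min hext hcv) hcl he
  intro x hx
  have hsub : (↑V : Set (Fin n → ℝ)) ⊆ {x | φ v ≤ φ x} := by
    intro x hx
    by_cases hxv : x = v
    · simp [hxv]
    have h1 := hK (N x) (subset_convexHull ℝ X ⟨x, ⟨hx, hxv⟩, rfl⟩)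
    have h2 := congrArg φ (hNx x hx hxv)
    rw [map_smul, smul_eq_mul, map_sub] at h2
    have := mul_nonneg (hu' x hx hxv).le h1
    show φ v ≤ φ x
    linarith
  have := convexHull_min hsub (convex_halfSpace_ge φ.isLinear (φ v)) hx
  rw [map_sub, sub_nonneg]; exact this

lemma exists_VD {n : ℕ} {P : Set (Fin n → ℝ)} (hP : IsLatticePolytope P)
    (hfull : affineSpan ℝ P = ⊤) (hsm : IsSmoothPoly P) {v : Fin n → ℝ}
    (hv : v ∈ P.extremePoints ℝ) : ∃ w a b c, VD P v w a b c := by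
  obtain ⟨V, hV, rfl⟩ := hP
  have hvs : vectorSpan ℝ (convexHull ℝ (↑V : Set (Fin n → ℝ))) = ⊤ :=
    AffineSubspace.vectorSpan_eq_top_of_affineSpan_eq_top _ _ _ hfull
  have hfd : fdim (convexHull ℝ (↑V : Set (Fin n → ℝ))) = n := by
    unfold fdim; rw [hvs]; simp
  have h := hsm v hv
  rw [hfd] at h
  obtain ⟨w, c, hc, _, hlin, _, hgen, hF⟩ := h
  change LinearIndependent ℝ (fun i => cz (w i)) at hlin
  have hgen' : ∀ z : Fin n → ℤ, ∃ m : Fin n → ℤ, cz z = ∑ i, (m i : ℝ) • cz (w i) :=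
    fun z => hgen z (by rw [hvs]; trivial)
  choose m hm using fun k : Fin n => hgen' (Pi.single k 1)
  have hexp : ∀ x : Fin n → ℝ, x = ∑ i, iprod (fun k => m k i) x • cz (w i) := by
    intro x
    have h1 : x = ∑ k, x k • cz (Pi.single k (1:ℤ)) := by
      ext j
      simp [cz, Pi.single_apply]
    conv_lhs => rw [h1]
    simp_rw [hm, Finset.smul_sum, smul_smul, iprod, Finset.sum_smul]
    rw [Finset.sum_comm]
    exact Finset.sum_congr rfl fun i _ => Finset.sum_congr rfl fun k _ => by rw [mul_comm]
  have hdual : ∀ i j, iprod (fun k => m k i) (cz (w j)) = if i = j then 1 else 0 := by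
    intro i j
    have h1 := hexp (cz (w j))
    have h2 : ∑ i, (iprod (fun k => m k i) (cz (w j)) - if i = j then 1 else 0) • cz (w i) = 0 := by
      simp_rw [sub_smul]
      rw [Finset.sum_sub_distrib, ← h1]
      simp
    have := Fintype.linearIndependent_iff.1 hlin _ h2 i
    linarith
  have hlatv : IsLatticePt v := hV v (extremePoints_convexHull_subset hv)
  choose b hb using fun i => iprod_lattice (fun k => m k i) v hlatv
  have hseg : ∀ i, segment ℝ v (v + c i • cz (w i)) ⊆ convexHull ℝ (↑V : Set (Fin n → ℝ)) := by
    intro i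
    obtain ⟨⟨_, u, cc, _, hFe⟩, _⟩ := (hF _).2 ⟨i, rfl⟩
    intro x hx
    rw [show (segment ℝ v (v + c i • cz (w i))) = _ from hFe] at hx
    exact hx.1
  refine ⟨w, fun i k => m k i, b, c, hc, hdual, hexp, fun i => hseg i (right_mem_segment _ _ _),
    ?_, hb⟩
  intro x hx i
  refine cone_edges V hv (lf fun k => m k i) ?_ x hx
  intro F h1 h2 h3 y hy
  obtain ⟨k, hk⟩ := (hF F).1 ⟨h1, h2, h3⟩
  rw [hk] at hy
  rw [segment_eq_image'] at hy
  obtain ⟨t, ht, rfl⟩ := hy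
  change 0 ≤ lf (fun k => m k i) (v + t • (v + c k • cz (w k) - v) - v)
  rw [add_sub_cancel_left, add_sub_cancel_left, map_smul, map_smul, lf_apply, hdual]
  have := hc k
  have := ht.1
  split_ifs <;> simp; positivity

lemma iprod_inj {n : ℕ} {a a' : Fin n → ℤ} (h : ∀ x, iprod a x = iprod a' x) : a = a' := by
  ext k
  have := h (Pi.single k 1)
  simpa [iprod, Pi.single_apply] using this

/-- a facet form active at `v` is one of the forms at `v` -/
lemma VD.active {n : ℕ} {P : Set (Fin n → ℝ)} {v v' : Fin n → ℝ} {w a w' a' : Fin n → Fin n → ℤ}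
    {b b' : Fin n → ℤ} {c c' : Fin n → ℝ} (H : VD P v w a b c) (H' : VD P v' w' a' b' c')
    (hv' : v' ∈ P) (j : Fin n) (hj : iprod (a' j) v = b' j) : ∃ i, a i = a' j ∧ b i = b' j := by
  have hvv : iprod (a' j) v = iprod (a' j) v' := hj.trans (H'.bv j).symm
  have hge : ∀ i, 0 ≤ iprod (a' j) (cz (w i)) := by
    intro i
    have h1 := H'.nonneg _ (H.mem i) j
    rw [iprod_sub, iprod_add, iprod_smul, hvv, add_sub_cancel_left] at h1
    exact nonneg_of_mul_nonneg_right h1 (H.cpos i)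
  have hexp : ∀ x, iprod (a' j) x = ∑ i, iprod (a i) x * iprod (a' j) (cz (w i)) := by
    intro x
    conv_lhs => rw [H.expand x]
    rw [← lf_apply, map_sum]
    simp
  have hex : ∃ i, iprod (a' j) (cz (w i)) ≠ 0 := by
    by_contra hcon
    push Not at hcon
    have h1 := H'.dual j j
    rw [hexp, if_pos rfl] at h1
    simp [hcon] at h1
  obtain ⟨i, hi⟩ := hex
  have hpos : 0 < iprod (a' j) (cz (w i)) := lt_of_le_of_ne (hge i) hi.symm
  have hvan : ∀ x ∈ P, iprod (a' j) x = b' j → iprod (a i) (x - v) = 0 := by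
    intro x hx hxb
    have h1 := hexp (x - v)
    rw [iprod_sub, hxb, hj, sub_self] at h1
    have h2 := (Finset.sum_eq_zero_iff_of_nonneg
      (fun k _ => mul_nonneg (H.nonneg x hx k) (hge k))).1 h1.symm i (Finset.mem_univ _)
    exact (mul_eq_zero.1 h2).resolve_right hi
  have h0 := hvan v' hv' (H'.bv j)
  have hk0 : ∀ k, k ≠ j → iprod (a i) (cz (w' k)) = 0 := by
    intro k hk
    have h1 := hvan _ (H'.mem k) (by
      rw [iprod_add, iprod_smul, H'.dual, if_neg hk.symm, H'.bv]; simp)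
    rw [iprod_sub, iprod_add, iprod_smul] at h1
    rw [iprod_sub] at h0
    have h2 : c' k * iprod (a i) (cz (w' k)) = 0 := by linarith
    exact (mul_eq_zero.1 h2).resolve_left (H'.cpos k).ne'
  have hprop : ∀ y, iprod (a i) y = iprod (a' j) y * iprod (a i) (cz (w' j)) := by
    intro y
    conv_lhs => rw [H'.expand y]
    rw [← lf_apply, map_sum, Finset.sum_eq_single j]
    · simp
    · intro k _ hk; simp [hk0 k hk]
    · intro h; exact absurd (Finset.mem_univ _) h
  have h1 := hprop (cz (w i))
  rw [H.dual, if_pos rfl] at h1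
  have hκ : iprod (a i) (cz (w' j)) = 1 := by
    rw [iprod_cz, iprod_cz] at h1
    rw [iprod_cz] at hpos ⊢
    have h2 : (∑ k, a' j k * w i k) * (∑ k, a i k * w' j k) = 1 := by exact_mod_cast h1.symm
    have h3 : 0 < ∑ k, a' j k * w i k := by exact_mod_cast hpos
    have h4 : (∑ k, a i k * w' j k) = 1 := by
      rcases Int.eq_one_or_neg_one_of_mul_eq_one h2 with h | h
      · rw [h, one_mul] at h2; exact h2
      · omega
    rw [h4]; simp
  have haa : a i = a' j := iprod_inj fun x => by rw [hprop x, hκ, mul_one]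
  refine ⟨i, haa, ?_⟩
  have h5 := H.bv i
  rw [haa, hj] at h5
  exact_mod_cast h5.symm

lemma exists_Sys {n : ℕ} {P : Set (Fin n → ℝ)} (hP : IsLatticePolytope P)
    (hfull : affineSpan ℝ P = ⊤) (hsm : IsSmoothPoly P) :
    ∃ (ι : Type) (_ : Fintype ι) (_ : DecidableEq ι), Nonempty (Sys n ι P) := by
  classical
  have hne : P.Nonempty := by
    by_contra h
    rw [Set.not_nonempty_iff_eq_empty] at h
    rw [h, AffineSubspace.span_empty] at hfull
    exact AffineSubspace.bot_ne_top ℝ _ _ hfull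
  have hex := fun v : ↥(P.extremePoints ℝ) => exists_VD hP hfull hsm v.2
  choose w a b c H using hex
  obtain ⟨V, hV, hPV⟩ := hP
  have hcpt : IsCompact P := by rw [hPV]; exact V.finite_toSet.isCompact_convexHull ℝ
  have hclosed := hcpt.isClosed
  have hconv : Convex ℝ P := by rw [hPV]; exact convex_convexHull ℝ _
  have hsubV : P.extremePoints ℝ ⊆ (↑V : Set (Fin n → ℝ)) := by
    rw [hPV]; exact extremePoints_convexHull_subset
  have hlat : ∀ v ∈ P.extremePoints ℝ, IsLatticePt v := fun v hv => hV v (hsubV hv)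
  haveI : Finite ↥(P.extremePoints ℝ) := (V.finite_toSet.subset hsubV).to_subtype
  let fac0 : ↥(P.extremePoints ℝ) × Fin n → (Fin n → ℤ) × ℤ := fun q => (a q.1 q.2, b q.1 q.2)
  let ι := ↥(Set.range fac0)
  haveI : Finite ι := (Set.finite_range fac0).to_subtype
  haveI : Fintype ι := Fintype.ofFinite ι
  let fac : ↥(P.extremePoints ℝ) → Fin n → ι := fun v i => ⟨fac0 (v, i), ⟨(v, i), rfl⟩⟩
  have facInj : ∀ v, Function.Injective (fac v) := by
    intro v i j hij
    have h1 : a v i = a v j := congrArg (fun z : ι => z.1.1) hij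
    have h2 := (H v).dual j j
    rw [← h1, (H v).dual, if_pos rfl] at h2
    by_contra hne
    rw [if_neg hne] at h2
    exact zero_ne_one h2
  have hactive : ∀ (v : ↥(P.extremePoints ℝ)) (z : ι),
      iprod z.1.1 v = z.1.2 ↔ ∃ i, fac v i = z := by
    intro v z
    constructor
    · obtain ⟨_, ⟨⟨v', j⟩, rfl⟩⟩ := z
      intro h
      obtain ⟨i, h1, h2⟩ := (H v).active (H v') v'.2.1 j h
      exact ⟨i, Subtype.ext (Prod.ext h1 h2)⟩
    · rintro ⟨i, rfl⟩
      exact (H v).bv i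
  have hfilter : ∀ v : ↥(P.extremePoints ℝ),
      (Finset.univ.filter fun z : ι => iprod z.1.1 v = z.1.2) = Finset.univ.image (fac v) := by
    intro v
    ext z
    simp [hactive]
  let W : (Fin n → ℝ) → ι → Fin n → ℤ := fun v =>
    if hv : v ∈ P.extremePoints ℝ then Function.extend (fac ⟨v, hv⟩) (w ⟨v, hv⟩) 0 else 0
  have hW : ∀ (v : ↥(P.extremePoints ℝ)) i, W v (fac v i) = w v i := by
    intro v i
    have : W v = Function.extend (fac v) (w v) 0 := dif_pos v.2
    rw [this, (facInj v).extend_apply]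
  refine ⟨ι, inferInstance, inferInstance, ⟨{
    a := fun z => z.1.1
    b := fun z => z.1.2
    W := W
    mem := ?_
    cpt := hcpt
    ne := hne
    lat := hlat
    dual := ?_
    expand := ?_
    card := ?_ }⟩⟩
  · intro x
    constructor
    · rintro hx ⟨_, ⟨⟨v, i⟩, rfl⟩⟩
      have := (H v).nonneg x hx i
      rw [iprod_sub, (H v).bv] at this
      exact this
    · intro hx
      by_contra hxP
      obtain ⟨f, s, h1, h2⟩ := geometric_hahn_banach_point_closed hconv hclosed hxP
      obtain ⟨y, hy, hmin⟩ := hcpt.exists_isMinOn hne f.continuous.continuousOn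
      have hmin' : ∀ z ∈ P, f y ≤ f z := fun z hz => hmin hz
      have hFx : IsExtreme ℝ P {z ∈ P | f.toLinearMap z = f y} :=
        face_extreme f.toLinearMap (f y) hmin'
      have hFc : IsCompact {z ∈ P | f.toLinearMap z = f y} :=
        hcpt.inter_right (isClosed_eq f.continuous continuous_const)
      obtain ⟨v, hvF⟩ := hFc.extremePoints_nonempty ⟨y, hy, rfl⟩
      have hv := hFx.extremePoints_subset_extremePoints hvF
      have hfv : f v = f y := hvF.1.2
      have Hv := H ⟨v, hv⟩
      have e1 := congrArg f (Hv.expand (x - v))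
      rw [map_sum, map_sub] at e1
      have e2 : 0 ≤ ∑ i, f (iprod (a ⟨v, hv⟩ i) (x - v) • cz (w ⟨v, hv⟩ i)) := by
        refine Finset.sum_nonneg fun i _ => ?_
        rw [map_smul, smul_eq_mul]
        refine mul_nonneg ?_ ?_
        · have := hx (fac ⟨v, hv⟩ i)
          rw [iprod_sub, Hv.bv]; exact this
        · have h3 := hmin' _ (Hv.mem i)
          rw [map_add, map_smul, hfv, smul_eq_mul] at h3
          exact nonneg_of_mul_nonneg_right (by linarith) (Hv.cpos i)
      have h4 := h2 v hv.1
      linarith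
  · intro v hv i j hi hj
    obtain ⟨i, rfl⟩ := (hactive ⟨v, hv⟩ i).1 hi
    obtain ⟨j, rfl⟩ := (hactive ⟨v, hv⟩ j).1 hj
    rw [hW ⟨v, hv⟩ j]
    refine ((H ⟨v, hv⟩).dual i j).trans ?_
    by_cases hij : i = j
    · rw [if_pos hij, if_pos (congrArg _ hij)]
    · rw [if_neg hij, if_neg fun h => hij (facInj _ h)]
  · intro v hv x
    rw [hfilter ⟨v, hv⟩, Finset.sum_image (fun i _ j _ h => facInj _ h)]
    have h1 := (H ⟨v, hv⟩).expand (x - v)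
    rw [← sub_eq_iff_eq_add']
    rw [h1]
    refine Finset.sum_congr rfl fun i _ => ?_
    rw [hW ⟨v, hv⟩ i, iprod_sub, (H ⟨v, hv⟩).bv]
  · intro v hv
    rw [hfilter ⟨v, hv⟩, Finset.card_image_of_injective _ (facInj _), Finset.card_univ,
      Fintype.card_fin]

/-- For a smooth full-dimensional lattice polytope `P ⊆ ℝ^n`, the alternating
sum `Σ_F (-1)^{n - dim F} (dim F + 1)! Vol(F)` over all nonempty faces `F` of `P`
(including `P` itself) is nonnegative. -/
theorem stmt7 {n : ℕ} (P : Set (Fin n → ℝ)) (hP : IsLatticePolytope P)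
    (hfull : affineSpan ℝ P = ⊤) (hsm : IsSmoothPoly P) :
    ∀ 𝓕 : Finset (Set (Fin n → ℝ)), (∀ F, F ∈ 𝓕 ↔ IsFace P F) →
      ∀ volf : Set (Fin n → ℝ) → ℝ, (∀ F ∈ 𝓕, HasRelVol F (volf F)) →
        0 ≤ faceSum 𝓕 volf := by
  intro 𝓕 h𝓕 volf hv
  obtain ⟨ι, _, _, ⟨S⟩⟩ := exists_Sys hP hfull hsm
  exact S.final 𝓕 h𝓕 volf hv
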